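/- There is a family of first-order sequents {S_i}_{i<ω} such that: (1) the size of S_i is polynomial in i; (2) there is no elementary function of i bounding the size of the smallest cut-free LK⁺-proofs (and likewise of the smallest cut-free LK⁺⁺-proofs) of S_i; (3) S_i has proofs with cuts of size polynomially bounded in i; (4) S_i contains weak quantifiers only; and (5) for every cut-formula A occurring in the polynomial-size proof of S_i, the formula ∀x̄ (A^M → A^M) occurs on the left-hand side of the end-sequent S_i, where A^M is the matrix of A. -/

import Mathlib

namespace EpsCalc

/-! ## Syntax: terms and formulas of first-order logic extended by epsilon terms.
We use a locally nameless representation: `bvar` are de Bruijn indices for bound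
variables (bound by `all`, `ex`, or `eps`), `fvar` are named free variables. -/

mutual
inductive Tm : Type where
  | bvar : ℕ → Tm
  | fvar : ℕ → Tm
  | func : ℕ → Tms → Tm
  | eps  : Fm → Tm          -- the epsilon term ε_x A(x)

inductive Tms : Type where
  | nil  : Tms
  | cons : Tm → Tms → Tms

inductive Fm : Type where
  | atom : ℕ → Tms → Fm
  | and  : Fm → Fm → Fm
  | or   : Fm → Fm → Fm
  | imp  : Fm → Fm → Fm
  | not  : Fm → Fm
  | all  : Fm → Fm          -- ∀ binding de Bruijn index 0
  | ex   : Fm → Fm          -- ∃ binding de Bruijn index 0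
end

/-! lifting of bound variables (shift indices ≥ k by one) -/
mutual
def liftT (k : ℕ) : Tm → Tm
  | .bvar n => if n < k then .bvar n else .bvar (n+1)
  | .fvar a => .fvar a
  | .func f ts => .func f (liftTs k ts)
  | .eps A => .eps (liftF (k+1) A)
def liftTs (k : ℕ) : Tms → Tms
  | .nil => .nil
  | .cons t ts => .cons (liftT k t) (liftTs k ts)
def liftF (k : ℕ) : Fm → Fm
  | .atom p ts => .atom p (liftTs k ts)
  | .and A B => .and (liftF k A) (liftF k B)
  | .or A B => .or (liftF k A) (liftF k B)
  | .imp A B => .imp (liftF k A) (liftF k B)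
  | .not A => .not (liftF k A)
  | .all A => .all (liftF (k+1) A)
  | .ex A => .ex (liftF (k+1) A)
end

/-! substitution of a term for the bound variable k -/
mutual
def subT (k : ℕ) (u : Tm) : Tm → Tm
  | .bvar n => if n = k then u else if n < k then .bvar n else .bvar (n-1)
  | .fvar a => .fvar a
  | .func f ts => .func f (subTs k u ts)
  | .eps A => .eps (subF (k+1) (liftT 0 u) A)
def subTs (k : ℕ) (u : Tm) : Tms → Tms
  | .nil => .nil
  | .cons t ts => .cons (subT k u t) (subTs k u ts)
def subF (k : ℕ) (u : Tm) : Fm → Fm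
  | .atom p ts => .atom p (subTs k u ts)
  | .and A B => .and (subF k u A) (subF k u B)
  | .or A B => .or (subF k u A) (subF k u B)
  | .imp A B => .imp (subF k u A) (subF k u B)
  | .not A => .not (subF k u A)
  | .all A => .all (subF (k+1) (liftT 0 u) A)
  | .ex A => .ex (subF (k+1) (liftT 0 u) A)
end

/-- instantiate the outermost bound variable of `A` with the term `t`:  A(t) -/
def inst0 (A : Fm) (t : Tm) : Fm := subF 0 t A

/-! substitution of a term for a *free* variable -/
mutual
def sfvT (a : ℕ) (u : Tm) : Tm → Tm
  | .bvar n => .bvar n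
  | .fvar b => if b = a then u else .fvar b
  | .func f ts => .func f (sfvTs a u ts)
  | .eps A => .eps (sfvF a (liftT 0 u) A)
def sfvTs (a : ℕ) (u : Tm) : Tms → Tms
  | .nil => .nil
  | .cons t ts => .cons (sfvT a u t) (sfvTs a u ts)
def sfvF (a : ℕ) (u : Tm) : Fm → Fm
  | .atom p ts => .atom p (sfvTs a u ts)
  | .and A B => .and (sfvF a u A) (sfvF a u B)
  | .or A B => .or (sfvF a u A) (sfvF a u B)
  | .imp A B => .imp (sfvF a u A) (sfvF a u B)
  | .not A => .not (sfvF a u A)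
  | .all A => .all (sfvF a (liftT 0 u) A)
  | .ex A => .ex (sfvF a (liftT 0 u) A)
end

/-! abstraction of a free variable into a bound variable (for universal closure) -/
mutual
def abT (a k : ℕ) : Tm → Tm
  | .bvar n => .bvar n
  | .fvar b => if b = a then .bvar k else .fvar b
  | .func f ts => .func f (abTs a k ts)
  | .eps A => .eps (abF a (k+1) A)
def abTs (a k : ℕ) : Tms → Tms
  | .nil => .nil
  | .cons t ts => .cons (abT a k t) (abTs a k ts)
def abF (a k : ℕ) : Fm → Fm
  | .atom p ts => .atom p (abTs a k ts)
  | .and A B => .and (abF a k A) (abF a k B)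
  | .or A B => .or (abF a k A) (abF a k B)
  | .imp A B => .imp (abF a k A) (abF a k B)
  | .not A => .not (abF a k A)
  | .all A => .all (abF a (k+1) A)
  | .ex A => .ex (abF a (k+1) A)
end

/-! free variables -/
mutual
def fvT : Tm → List ℕ
  | .bvar _ => []
  | .fvar a => [a]
  | .func _ ts => fvTs ts
  | .eps A => fvF A
def fvTs : Tms → List ℕ
  | .nil => []
  | .cons t ts => fvT t ++ fvTs ts
def fvF : Fm → List ℕ
  | .atom _ ts => fvTs ts
  | .and A B => fvF A ++ fvF B
  | .or A B => fvF A ++ fvF B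
  | .imp A B => fvF A ++ fvF B
  | .not A => fvF A
  | .all A => fvF A
  | .ex A => fvF A
end

/-! function symbols occurring in an expression -/
mutual
def fsT : Tm → List ℕ
  | .bvar _ => []
  | .fvar _ => []
  | .func f ts => f :: fsTs ts
  | .eps A => fsF A
def fsTs : Tms → List ℕ
  | .nil => []
  | .cons t ts => fsT t ++ fsTs ts
def fsF : Fm → List ℕ
  | .atom _ ts => fsTs ts
  | .and A B => fsF A ++ fsF B
  | .or A B => fsF A ++ fsF B
  | .imp A B => fsF A ++ fsF B
  | .not A => fsF A
  | .all A => fsF A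
  | .ex A => fsF A
end

/-! number of symbols (size) -/
mutual
def szT : Tm → ℕ
  | .bvar _ => 1
  | .fvar _ => 1
  | .func _ ts => 1 + szTs ts
  | .eps A => 1 + szF A
def szTs : Tms → ℕ
  | .nil => 0
  | .cons t ts => szT t + szTs ts
def szF : Fm → ℕ
  | .atom _ ts => 1 + szTs ts
  | .and A B => 1 + szF A + szF B
  | .or A B => 1 + szF A + szF B
  | .imp A B => 1 + szF A + szF B
  | .not A => 1 + szF A
  | .all A => 1 + szF A
  | .ex A => 1 + szF A
end

/-! epsilon-freeness (first-order language) and quantifier-freeness (epsilon language) -/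
mutual
def noEpsT : Tm → Bool
  | .bvar _ => true
  | .fvar _ => true
  | .func _ ts => noEpsTs ts
  | .eps _ => false
def noEpsTs : Tms → Bool
  | .nil => true
  | .cons t ts => noEpsT t && noEpsTs ts
def noEpsF : Fm → Bool
  | .atom _ ts => noEpsTs ts
  | .and A B => noEpsF A && noEpsF B
  | .or A B => noEpsF A && noEpsF B
  | .imp A B => noEpsF A && noEpsF B
  | .not A => noEpsF A
  | .all A => noEpsF A
  | .ex A => noEpsF A
end

/-- `A` is a formula of the first-order language: it contains no epsilon terms. -/
def isFO (A : Fm) : Bool := noEpsF A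

/-- quantifier-freeness: `A` belongs to the language of the epsilon calculus
(propositional language over epsilon terms) iff `qfree A`. -/
def qfree : Fm → Bool
  | .atom _ _ => true
  | .and A B => qfree A && qfree B
  | .or A B => qfree A && qfree B
  | .imp A B => qfree A && qfree B
  | .not A => qfree A
  | .all _ => false
  | .ex _ => false

/-- The epsilon translation [A]^ε of a formula. -/
def epsT : Fm → Fm
  | .atom p ts => .atom p ts
  | .and A B => .and (epsT A) (epsT B)
  | .or A B => .or (epsT A) (epsT B)
  | .imp A B => .imp (epsT A) (epsT B)
  | .not A => .not (epsT A)
  | .ex A => inst0 (epsT A) (.eps (epsT A))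
  | .all A => inst0 (epsT A) (.eps (.not (epsT A)))

/-! ## The matrix A^M of a formula: delete all quantifiers and replace the
variables bound by them by fresh free variables. -/
mutual
def mxT (b d : ℕ) : Tm → Tm
  | .bvar n => if n < d then .fvar (b + (d - 1 - n)) else .bvar (n - d)
  | .fvar a => .fvar a
  | .func f ts => .func f (mxTs b d ts)
  | .eps A => .eps A          -- (the matrix is only used on epsilon-free formulas)
def mxTs (b d : ℕ) : Tms → Tms
  | .nil => .nil
  | .cons t ts => .cons (mxT b d t) (mxTs b d ts)
def mxF (b d : ℕ) : Fm → Fm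
  | .atom p ts => .atom p (mxTs b d ts)
  | .and A B => .and (mxF b d A) (mxF b d B)
  | .or A B => .or (mxF b d A) (mxF b d B)
  | .imp A B => .imp (mxF b d A) (mxF b d B)
  | .not A => .not (mxF b d A)
  | .all A => mxF b (d+1) A
  | .ex A => mxF b (d+1) A
end

def maxFv (A : Fm) : ℕ := (fvF A).foldr max 0

/-- the matrix A^M of A -/
def matrix (A : Fm) : Fm := mxF (maxFv A + 1) 0 A

/-- universal closure ∀x̄ A over all free variables of A -/
def uclose (A : Fm) : Fm :=
  ((fvF A).dedup).foldr (fun a B => Fm.all (abF a 0 B)) A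

/-! ## Weak/strong quantifier occurrences.
`posW A` : all quantifier occurrences of `A` are weak when `A` occurs in the
succedent; `negW A` : likewise for the antecedent. -/
mutual
def posW : Fm → Bool
  | .atom _ _ => true
  | .and A B => posW A && posW B
  | .or A B => posW A && posW B
  | .imp A B => negW A && posW B
  | .not A => negW A
  | .all _ => false
  | .ex A => posW A
def negW : Fm → Bool
  | .atom _ _ => true
  | .and A B => negW A && negW B
  | .or A B => negW A && negW B
  | .imp A B => posW A && negW B
  | .not A => posW A
  | .all A => negW A
  | .ex _ => false
end

/-- the sequent Γ ⊢ Δ contains weak quantifier occurrences only -/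
def WeakSeq (Γ Δ : List Fm) : Prop :=
  (∀ A ∈ Γ, negW A = true) ∧ (∀ A ∈ Δ, posW A = true)

/-- the sequent Γ ⊢ Δ is in the first-order language -/
def FOSeq (Γ Δ : List Fm) : Prop :=
  (∀ A ∈ Γ, isFO A = true) ∧ (∀ A ∈ Δ, isFO A = true)

/-- the sequent Γ ⊢ Δ is in the language of the epsilon calculus -/
def EpsSeq (Γ Δ : List Fm) : Prop :=
  (∀ A ∈ Γ, qfree A = true) ∧ (∀ A ∈ Δ, qfree A = true)

def fvSeq (Γ Δ : List Fm) : List ℕ :=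
  (Γ ++ Δ).foldr (fun A l => fvF A ++ l) []

def fsSeq (Γ Δ : List Fm) : List ℕ :=
  (Γ ++ Δ).foldr (fun A l => fsF A ++ l) []

def seqSize (Γ Δ : List Fm) : ℕ :=
  (Γ ++ Δ).foldr (fun A n => szF A + n) 0


/-! ## LK derivation trees.
`Deriv Γ Δ` are derivation trees of the sequent Γ ⊢ Δ built from the rules of
Gentzen's LK, where the strong quantifier rules `allR`/`exL` carry an
eigenvariable but *no* correctness condition; the various eigenvariable
disciplines (LK, LK⁺, LK⁺⁺) are imposed as predicates on the trees below. -/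
inductive Deriv : List Fm → List Fm → Type where
  | ax (A : Fm) : Deriv [A] [A]
  | andL (A B : Fm) (Γ Δ : List Fm) :
      Deriv (A :: B :: Γ) Δ → Deriv (Fm.and A B :: Γ) Δ
  | andR (A B : Fm) (Γ₁ Δ₁ Γ₂ Δ₂ : List Fm) :
      Deriv Γ₁ (A :: Δ₁) → Deriv Γ₂ (B :: Δ₂) →
      Deriv (Γ₁ ++ Γ₂) (Fm.and A B :: (Δ₁ ++ Δ₂))
  | orL (A B : Fm) (Γ₁ Δ₁ Γ₂ Δ₂ : List Fm) :
      Deriv (A :: Γ₁) Δ₁ → Deriv (B :: Γ₂) Δ₂ →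
      Deriv (Fm.or A B :: (Γ₁ ++ Γ₂)) (Δ₁ ++ Δ₂)
  | orR (A B : Fm) (Γ Δ : List Fm) :
      Deriv Γ (A :: B :: Δ) → Deriv Γ (Fm.or A B :: Δ)
  | impL (A B : Fm) (Γ₁ Δ₁ Γ₂ Δ₂ : List Fm) :
      Deriv Γ₁ (A :: Δ₁) → Deriv (B :: Γ₂) Δ₂ →
      Deriv (Fm.imp A B :: (Γ₁ ++ Γ₂)) (Δ₁ ++ Δ₂)
  | impR (A B : Fm) (Γ Δ : List Fm) :
      Deriv (A :: Γ) (B :: Δ) → Deriv Γ (Fm.imp A B :: Δ)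
  | notL (A : Fm) (Γ Δ : List Fm) :
      Deriv Γ (A :: Δ) → Deriv (Fm.not A :: Γ) Δ
  | notR (A : Fm) (Γ Δ : List Fm) :
      Deriv (A :: Γ) Δ → Deriv Γ (Fm.not A :: Δ)
  | wL (A : Fm) (Γ Δ : List Fm) : Deriv Γ Δ → Deriv (A :: Γ) Δ
  | wR (A : Fm) (Γ Δ : List Fm) : Deriv Γ Δ → Deriv Γ (A :: Δ)
  | cL (A : Fm) (Γ Δ : List Fm) : Deriv (A :: A :: Γ) Δ → Deriv (A :: Γ) Δ
  | cR (A : Fm) (Γ Δ : List Fm) : Deriv Γ (A :: A :: Δ) → Deriv Γ (A :: Δ)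
  | cut (A : Fm) (Γ₁ Δ₁ Γ₂ Δ₂ : List Fm) :
      Deriv Γ₁ (A :: Δ₁) → Deriv (A :: Γ₂) Δ₂ →
      Deriv (Γ₁ ++ Γ₂) (Δ₁ ++ Δ₂)
  | allL (t : Tm) (A : Fm) (Γ Δ : List Fm) :
      Deriv (inst0 A t :: Γ) Δ → Deriv (Fm.all A :: Γ) Δ
  | allR (a : ℕ) (A : Fm) (Γ Δ : List Fm) :
      Deriv Γ (inst0 A (Tm.fvar a) :: Δ) → Deriv Γ (Fm.all A :: Δ)
  | exL (a : ℕ) (A : Fm) (Γ Δ : List Fm) :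
      Deriv (inst0 A (Tm.fvar a) :: Γ) Δ → Deriv (Fm.ex A :: Γ) Δ
  | exR (t : Tm) (A : Fm) (Γ Δ : List Fm) :
      Deriv Γ (inst0 A t :: Δ) → Deriv Γ (Fm.ex A :: Δ)
  | permL (Γ Γ' Δ : List Fm) : Γ.Perm Γ' → Deriv Γ Δ → Deriv Γ' Δ
  | permR (Γ Δ Δ' : List Fm) : Δ.Perm Δ' → Deriv Γ Δ → Deriv Γ Δ'

namespace Deriv

/-- the size of a derivation: the number of inference steps occurring in it -/
def size : ∀ {Γ Δ}, Deriv Γ Δ → ℕ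
  | _, _, ax _ => 1
  | _, _, andL _ _ _ _ d => d.size + 1
  | _, _, andR _ _ _ _ _ _ d e => d.size + e.size + 1
  | _, _, orL _ _ _ _ _ _ d e => d.size + e.size + 1
  | _, _, orR _ _ _ _ d => d.size + 1
  | _, _, impL _ _ _ _ _ _ d e => d.size + e.size + 1
  | _, _, impR _ _ _ _ d => d.size + 1
  | _, _, notL _ _ _ d => d.size + 1
  | _, _, notR _ _ _ d => d.size + 1
  | _, _, wL _ _ _ d => d.size + 1
  | _, _, wR _ _ _ d => d.size + 1
  | _, _, cL _ _ _ d => d.size + 1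
  | _, _, cR _ _ _ d => d.size + 1
  | _, _, cut _ _ _ _ _ d e => d.size + e.size + 1
  | _, _, allL _ _ _ _ d => d.size + 1
  | _, _, allR _ _ _ _ d => d.size + 1
  | _, _, exL _ _ _ _ d => d.size + 1
  | _, _, exR _ _ _ _ d => d.size + 1
  | _, _, permL _ _ _ _ d => d.size + 1
  | _, _, permR _ _ _ _ d => d.size + 1

/-- the list of cut formulas occurring in a derivation -/
def cutFms : ∀ {Γ Δ}, Deriv Γ Δ → List Fm
  | _, _, ax _ => []
  | _, _, andL _ _ _ _ d => d.cutFms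
  | _, _, andR _ _ _ _ _ _ d e => d.cutFms ++ e.cutFms
  | _, _, orL _ _ _ _ _ _ d e => d.cutFms ++ e.cutFms
  | _, _, orR _ _ _ _ d => d.cutFms
  | _, _, impL _ _ _ _ _ _ d e => d.cutFms ++ e.cutFms
  | _, _, impR _ _ _ _ d => d.cutFms
  | _, _, notL _ _ _ d => d.cutFms
  | _, _, notR _ _ _ d => d.cutFms
  | _, _, wL _ _ _ d => d.cutFms
  | _, _, wR _ _ _ d => d.cutFms
  | _, _, cL _ _ _ d => d.cutFms
  | _, _, cR _ _ _ d => d.cutFms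
  | _, _, cut A _ _ _ _ d e => A :: (d.cutFms ++ e.cutFms)
  | _, _, allL _ _ _ _ d => d.cutFms
  | _, _, allR _ _ _ _ d => d.cutFms
  | _, _, exL _ _ _ _ d => d.cutFms
  | _, _, exR _ _ _ _ d => d.cutFms
  | _, _, permL _ _ _ _ d => d.cutFms
  | _, _, permR _ _ _ _ d => d.cutFms

/-- data of the strong quantifier inferences of a derivation:
(eigenvariable, auxiliary formula, main formula) -/
def strongs : ∀ {Γ Δ}, Deriv Γ Δ → List (ℕ × Fm × Fm)
  | _, _, ax _ => []
  | _, _, andL _ _ _ _ d => d.strongs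
  | _, _, andR _ _ _ _ _ _ d e => d.strongs ++ e.strongs
  | _, _, orL _ _ _ _ _ _ d e => d.strongs ++ e.strongs
  | _, _, orR _ _ _ _ d => d.strongs
  | _, _, impL _ _ _ _ _ _ d e => d.strongs ++ e.strongs
  | _, _, impR _ _ _ _ d => d.strongs
  | _, _, notL _ _ _ d => d.strongs
  | _, _, notR _ _ _ d => d.strongs
  | _, _, wL _ _ _ d => d.strongs
  | _, _, wR _ _ _ d => d.strongs
  | _, _, cL _ _ _ d => d.strongs
  | _, _, cR _ _ _ d => d.strongs
  | _, _, cut _ _ _ _ _ d e => d.strongs ++ e.strongs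
  | _, _, allL _ _ _ _ d => d.strongs
  | _, _, allR a A _ _ d => (a, inst0 A (Tm.fvar a), Fm.all A) :: d.strongs
  | _, _, exL a A _ _ d => (a, inst0 A (Tm.fvar a), Fm.ex A) :: d.strongs
  | _, _, exR _ _ _ _ d => d.strongs
  | _, _, permL _ _ _ _ d => d.strongs
  | _, _, permR _ _ _ _ d => d.strongs

/-- the standard (local) eigenvariable conditions of LK: the eigenvariable of a
strong quantifier inference does not occur free in its conclusion -/
def Std : ∀ {Γ Δ}, Deriv Γ Δ → Prop
  | _, _, ax _ => True
  | _, _, andL _ _ _ _ d => d.Std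
  | _, _, andR _ _ _ _ _ _ d e => d.Std ∧ e.Std
  | _, _, orL _ _ _ _ _ _ d e => d.Std ∧ e.Std
  | _, _, orR _ _ _ _ d => d.Std
  | _, _, impL _ _ _ _ _ _ d e => d.Std ∧ e.Std
  | _, _, impR _ _ _ _ d => d.Std
  | _, _, notL _ _ _ d => d.Std
  | _, _, notR _ _ _ d => d.Std
  | _, _, wL _ _ _ d => d.Std
  | _, _, wR _ _ _ d => d.Std
  | _, _, cL _ _ _ d => d.Std
  | _, _, cR _ _ _ d => d.Std
  | _, _, cut _ _ _ _ _ d e => d.Std ∧ e.Std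
  | _, _, allL _ _ _ _ d => d.Std
  | _, _, allR a A Γ Δ d => a ∉ fvSeq Γ (Fm.all A :: Δ) ∧ d.Std
  | _, _, exL a A Γ Δ d => a ∉ fvSeq (Fm.ex A :: Γ) Δ ∧ d.Std
  | _, _, exR _ _ _ _ d => d.Std
  | _, _, permL _ _ _ _ d => d.Std
  | _, _, permR _ _ _ _ d => d.Std

end Deriv

/-- the side variable relation `<_φ`: `b` is a side variable of `a` in `φ` if `φ`
contains a strong quantifier inference with eigenvariable `a` whose auxiliary
formula contains the free variable `b` -/
def sideRel {Γ Δ} (d : Deriv Γ Δ) (a b : ℕ) : Prop :=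
  ∃ e ∈ d.strongs, e.1 = a ∧ b ∈ fvF e.2.1 ∧ b ≠ a

/-- acyclicity of a binary relation -/
def Acyc (r : ℕ → ℕ → Prop) : Prop := ∀ x, ¬ Relation.TransGen r x x

/-- LK⁺-suitability of (all strong quantifier inferences of) a derivation:
substitutability, the side variable condition, and weak regularity. -/
def SuitP {Γ Δ} (d : Deriv Γ Δ) : Prop :=
  (∀ e ∈ d.strongs, e.1 ∉ fvSeq Γ Δ) ∧
  Acyc (sideRel d) ∧
  (d.strongs.map (·.1)).Nodup

/-- LK⁺⁺-suitability: substitutability, the side variable condition, and very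
weak regularity (equal eigenvariables only for equal main formulas). -/
def SuitPP {Γ Δ} (d : Deriv Γ Δ) : Prop :=
  (∀ e ∈ d.strongs, e.1 ∉ fvSeq Γ Δ) ∧
  Acyc (sideRel d) ∧
  (∀ e₁ ∈ d.strongs, ∀ e₂ ∈ d.strongs, e₁.1 = e₂.1 → e₁.2.2 = e₂.2.2)

/-! ## The sequent calculus Lε of the epsilon calculus:
atomic axioms, the propositional, structural and cut rules of LK, the weak
quantifier rules ∃_r and ∀_l producing epsilon terms, and a substitution rule
replacing the strong quantifier inferences. -/
inductive EDeriv : List Fm → List Fm → Type where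
  | ax (p : ℕ) (ts : Tms) : EDeriv [Fm.atom p ts] [Fm.atom p ts]
  | andL (A B : Fm) (Γ Δ : List Fm) :
      EDeriv (A :: B :: Γ) Δ → EDeriv (Fm.and A B :: Γ) Δ
  | andR (A B : Fm) (Γ₁ Δ₁ Γ₂ Δ₂ : List Fm) :
      EDeriv Γ₁ (A :: Δ₁) → EDeriv Γ₂ (B :: Δ₂) →
      EDeriv (Γ₁ ++ Γ₂) (Fm.and A B :: (Δ₁ ++ Δ₂))
  | orL (A B : Fm) (Γ₁ Δ₁ Γ₂ Δ₂ : List Fm) :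
      EDeriv (A :: Γ₁) Δ₁ → EDeriv (B :: Γ₂) Δ₂ →
      EDeriv (Fm.or A B :: (Γ₁ ++ Γ₂)) (Δ₁ ++ Δ₂)
  | orR (A B : Fm) (Γ Δ : List Fm) :
      EDeriv Γ (A :: B :: Δ) → EDeriv Γ (Fm.or A B :: Δ)
  | impL (A B : Fm) (Γ₁ Δ₁ Γ₂ Δ₂ : List Fm) :
      EDeriv Γ₁ (A :: Δ₁) → EDeriv (B :: Γ₂) Δ₂ →
      EDeriv (Fm.imp A B :: (Γ₁ ++ Γ₂)) (Δ₁ ++ Δ₂)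
  | impR (A B : Fm) (Γ Δ : List Fm) :
      EDeriv (A :: Γ) (B :: Δ) → EDeriv Γ (Fm.imp A B :: Δ)
  | notL (A : Fm) (Γ Δ : List Fm) :
      EDeriv Γ (A :: Δ) → EDeriv (Fm.not A :: Γ) Δ
  | notR (A : Fm) (Γ Δ : List Fm) :
      EDeriv (A :: Γ) Δ → EDeriv Γ (Fm.not A :: Δ)
  | wL (A : Fm) (Γ Δ : List Fm) : EDeriv Γ Δ → EDeriv (A :: Γ) Δ
  | wR (A : Fm) (Γ Δ : List Fm) : EDeriv Γ Δ → EDeriv Γ (A :: Δ)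
  | cL (A : Fm) (Γ Δ : List Fm) : EDeriv (A :: A :: Γ) Δ → EDeriv (A :: Γ) Δ
  | cR (A : Fm) (Γ Δ : List Fm) : EDeriv Γ (A :: A :: Δ) → EDeriv Γ (A :: Δ)
  | cut (A : Fm) (Γ₁ Δ₁ Γ₂ Δ₂ : List Fm) :
      EDeriv Γ₁ (A :: Δ₁) → EDeriv (A :: Γ₂) Δ₂ →
      EDeriv (Γ₁ ++ Γ₂) (Δ₁ ++ Δ₂)
  | allL (t : Tm) (A : Fm) (Γ Δ : List Fm) :
      EDeriv (inst0 A t :: Γ) Δ →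
      EDeriv (inst0 A (Tm.eps (Fm.not A)) :: Γ) Δ
  | exR (t : Tm) (A : Fm) (Γ Δ : List Fm) :
      EDeriv Γ (inst0 A t :: Δ) →
      EDeriv Γ (inst0 A (Tm.eps A) :: Δ)
  | subst (a : ℕ) (t : Tm) (Γ Δ : List Fm) :
      EDeriv Γ Δ → EDeriv (Γ.map (sfvF a t)) (Δ.map (sfvF a t))
  | permL (Γ Γ' Δ : List Fm) : Γ.Perm Γ' → EDeriv Γ Δ → EDeriv Γ' Δ
  | permR (Γ Δ Δ' : List Fm) : Δ.Perm Δ' → EDeriv Γ Δ → EDeriv Γ Δ'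

namespace EDeriv

/-- the size of an Lε derivation -/
def size : ∀ {Γ Δ}, EDeriv Γ Δ → ℕ
  | _, _, ax _ _ => 1
  | _, _, andL _ _ _ _ d => d.size + 1
  | _, _, andR _ _ _ _ _ _ d e => d.size + e.size + 1
  | _, _, orL _ _ _ _ _ _ d e => d.size + e.size + 1
  | _, _, orR _ _ _ _ d => d.size + 1
  | _, _, impL _ _ _ _ _ _ d e => d.size + e.size + 1
  | _, _, impR _ _ _ _ d => d.size + 1
  | _, _, notL _ _ _ d => d.size + 1
  | _, _, notR _ _ _ d => d.size + 1
  | _, _, wL _ _ _ d => d.size + 1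
  | _, _, wR _ _ _ d => d.size + 1
  | _, _, cL _ _ _ d => d.size + 1
  | _, _, cR _ _ _ d => d.size + 1
  | _, _, cut _ _ _ _ _ d e => d.size + e.size + 1
  | _, _, allL _ _ _ _ d => d.size + 1
  | _, _, exR _ _ _ _ d => d.size + 1
  | _, _, subst _ _ _ _ d => d.size + 1
  | _, _, permL _ _ _ _ d => d.size + 1
  | _, _, permR _ _ _ _ d => d.size + 1

/-- the list of cut formulas occurring in an Lε derivation -/
def cutFms : ∀ {Γ Δ}, EDeriv Γ Δ → List Fm
  | _, _, ax _ _ => []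
  | _, _, andL _ _ _ _ d => d.cutFms
  | _, _, andR _ _ _ _ _ _ d e => d.cutFms ++ e.cutFms
  | _, _, orL _ _ _ _ _ _ d e => d.cutFms ++ e.cutFms
  | _, _, orR _ _ _ _ d => d.cutFms
  | _, _, impL _ _ _ _ _ _ d e => d.cutFms ++ e.cutFms
  | _, _, impR _ _ _ _ d => d.cutFms
  | _, _, notL _ _ _ d => d.cutFms
  | _, _, notR _ _ _ d => d.cutFms
  | _, _, wL _ _ _ d => d.cutFms
  | _, _, wR _ _ _ d => d.cutFms
  | _, _, cL _ _ _ d => d.cutFms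
  | _, _, cR _ _ _ d => d.cutFms
  | _, _, cut A _ _ _ _ d e => A :: (d.cutFms ++ e.cutFms)
  | _, _, allL _ _ _ _ d => d.cutFms
  | _, _, exR _ _ _ _ d => d.cutFms
  | _, _, subst _ _ _ _ d => d.cutFms
  | _, _, permL _ _ _ _ d => d.cutFms
  | _, _, permR _ _ _ _ d => d.cutFms

end EDeriv

/-! ## Elementary functions and polynomial bounds -/

/-- `iterExp k n` is the `k`-fold iterated exponential 2^2^...^n. -/
def iterExp : ℕ → ℕ → ℕ
  | 0, n => n
  | k+1, n => 2 ^ iterExp k n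

/-- A function ℕ → ℕ is elementary (in the sense of Kalmár: definable by a
quantifier-free formula from +, ×, and x ↦ 2^x) iff it is majorized by some
fixed iterated exponential; we use this growth-rate characterization. -/
def IsElementary (f : ℕ → ℕ) : Prop := ∃ k, ∀ n, f n ≤ iterExp k n

/-- `g` is polynomially bounded -/
def PolyBdd (g : ℕ → ℕ) : Prop := ∃ p : Polynomial ℕ, ∀ n, g n ≤ p.eval n

/-! ## Skolemization (relationally): `SkP F A B` (`SkN F A B`) holds if `B` is
obtained from `A`, occurring in the succedent (antecedent), by replacing the
strong quantifiers by terms built from fresh function symbols in `F`. -/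
mutual
inductive SkP (F : ℕ → Prop) : Fm → Fm → Prop where
  | atom (p ts) : SkP F (Fm.atom p ts) (Fm.atom p ts)
  | and {A A' B B'} : SkP F A A' → SkP F B B' → SkP F (Fm.and A B) (Fm.and A' B')
  | or {A A' B B'} : SkP F A A' → SkP F B B' → SkP F (Fm.or A B) (Fm.or A' B')
  | imp {A A' B B'} : SkN F A A' → SkP F B B' → SkP F (Fm.imp A B) (Fm.imp A' B')
  | not {A A'} : SkN F A A' → SkP F (Fm.not A) (Fm.not A')
  | ex {A A'} : SkP F A A' → SkP F (Fm.ex A) (Fm.ex A')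
  | all {A B} (f : ℕ) (ts : Tms) : F f →
      SkP F (inst0 A (Tm.func f ts)) B → SkP F (Fm.all A) B
inductive SkN (F : ℕ → Prop) : Fm → Fm → Prop where
  | atom (p ts) : SkN F (Fm.atom p ts) (Fm.atom p ts)
  | and {A A' B B'} : SkN F A A' → SkN F B B' → SkN F (Fm.and A B) (Fm.and A' B')
  | or {A A' B B'} : SkN F A A' → SkN F B B' → SkN F (Fm.or A B) (Fm.or A' B')
  | imp {A A' B B'} : SkP F A A' → SkN F B B' → SkN F (Fm.imp A B) (Fm.imp A' B')
  | not {A A'} : SkP F A A' → SkN F (Fm.not A) (Fm.not A')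
  | all {A A'} : SkN F A A' → SkN F (Fm.all A) (Fm.all A')
  | ex {A B} (f : ℕ) (ts : Tms) : F f →
      SkN F (inst0 A (Tm.func f ts)) B → SkN F (Fm.ex A) B
end

/-- `S'` is a Skolemization of the sequent `S` using fresh function symbols from `F` -/
def SkolemSeq (F : ℕ → Prop) (S S' : List Fm × List Fm) : Prop :=
  List.Forall₂ (SkN F) S.1 S'.1 ∧ List.Forall₂ (SkP F) S.2 S'.2



/-! ## Auxiliary development -/

/-- simple terms -/
inductive Tr : Type where
  | bv : ℕ → Tr
  | fv : ℕ → Tr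
  | two : Tr
  | suc : Tr
  | zer : Tr
  | app : Tr → Tr → Tr

namespace Tr

def toTm : Tr → Tm
  | bv n => .bvar n
  | fv n => .fvar n
  | two => .func 1 .nil
  | suc => .func 2 .nil
  | zer => .func 3 .nil
  | app f x => .func 0 (.cons f.toTm (.cons x.toTm .nil))

def lift (k : ℕ) : Tr → Tr
  | bv n => if n < k then bv n else bv (n+1)
  | app f x => app (f.lift k) (x.lift k)
  | t => t

def sub (k : ℕ) : Tr → Tr → Tr
  | bv n, u => if n = k then u else if n < k then bv n else bv (n-1)
  | app f x, u => app (sub k f u) (sub k x u)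
  | t, _ => t

def fvs : Tr → List ℕ
  | fv n => [n]
  | app f x => f.fvs ++ x.fvs
  | _ => []

theorem liftT_toTm (k : ℕ) (t : Tr) : liftT k t.toTm = (t.lift k).toTm := by
  induction t with
  | bv n => simp only [toTm, liftT, lift]; split <;> rfl
  | app f x hf hx => simp [toTm, liftT, liftTs, lift, hf, hx]
  | _ => simp [toTm, liftT, liftTs, lift]

theorem subT_toTm (k : ℕ) (u t : Tr) : subT k u.toTm t.toTm = (t.sub k u).toTm := by
  induction t with
  | bv n =>
    simp only [toTm, subT, sub]
    split
    · rfl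
    · split <;> rfl
  | app f x hf hx => simp [toTm, subT, subTs, sub, hf, hx]
  | _ => simp [toTm, subT, subTs, sub]

@[simp] theorem fvT_toTm (t : Tr) : fvT t.toTm = t.fvs := by
  induction t with
  | app f x hf hx => simp [toTm, fvT, fvTs, fvs, hf, hx]
  | _ => simp [toTm, fvT, fvTs, fvs]

@[simp] theorem noEps_toTm (t : Tr) : noEpsT t.toTm = true := by
  induction t with
  | app f x hf hx => simp [toTm, noEpsT, noEpsTs, hf, hx]
  | _ => simp [toTm, noEpsT, noEpsTs]

@[simp] theorem sub_lift (t u : Tr) : (t.lift 0).sub 0 u = t := by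
  induction t with
  | app f x hf hx => simp [lift, sub, hf, hx]
  | _ => simp [lift, sub]

theorem sub_lift_succ (k : ℕ) (t u : Tr) :
    (t.lift 0).sub (k+1) (u.lift 0) = (t.sub k u).lift 0 := by
  induction t with
  | bv n =>
    simp only [lift, sub, Nat.not_lt_zero, if_false]
    by_cases h1 : n = k
    · simp [h1]
    · by_cases h2 : n < k
      · simp [h1, h2, lift]
      · have : n - 1 + 1 = n := by omega
        simp [h1, h2, lift, this]
  | app f x hf hx => simp [lift, sub, hf, hx]
  | _ => simp [lift, sub]

@[simp] theorem fvs_lift (k : ℕ) (t : Tr) : (t.lift k).fvs = t.fvs := by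
  induction t with
  | bv n => simp only [lift]; split <;> rfl
  | app f x hf hx => simp [lift, fvs, hf, hx]
  | _ => simp [lift, fvs]

theorem szT_lift (k : ℕ) (t : Tr) : szT (t.lift k).toTm = szT t.toTm := by
  induction t with
  | bv n => simp only [lift]; split <;> rfl
  | app f x hf hx => simp [lift, toTm, szT, szTs, hf, hx]
  | _ => simp [lift]

theorem szT_pos (t : Tr) : 1 ≤ szT t.toTm := by
  cases t <;> simp [toTm, szT]

/-- `t 2 2 ... 2` with `n` twos -/
def twos : ℕ → Tr → Tr
  | 0, t => t
  | n+1, t => twos n (app t two)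

end Tr

open Tr

def fI (t : Tr) : Fm := .atom 0 (.cons t.toTm .nil)
def fE (a b : Tr) : Fm := .atom 1 (.cons a.toTm (.cons b.toTm .nil))

/-- the tower of predicates -/
def NN : ℕ → Tr → Fm
  | 0, t => fI t
  | k+1, t => .all (.imp (NN k (bv 0)) (NN k (app (t.lift 0) (bv 0))))

theorem sub_fI (k : ℕ) (u t : Tr) : subF k u.toTm (fI t) = fI (t.sub k u) := by
  simp [fI, subF, subTs, subT_toTm]

theorem sub_fE (k : ℕ) (u a b : Tr) :
    subF k u.toTm (fE a b) = fE (a.sub k u) (b.sub k u) := by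
  simp [fE, subF, subTs, subT_toTm]

theorem sub_NN (n k : ℕ) (u t : Tr) : subF k u.toTm (NN n t) = NN n (t.sub k u) := by
  induction n generalizing k u t with
  | zero => exact sub_fI k u t
  | succ n ih =>
    simp only [NN, subF, liftT_toTm, ih, sub, sub_lift_succ]
    simp

theorem fv_NN (n : ℕ) (t : Tr) : ∀ a, a ∈ fvF (NN n t) → a ∈ t.fvs := by
  induction n generalizing t with
  | zero => intro a; simp [NN, fI, fvF, fvTs]
  | succ n ih =>
    intro a h
    simp only [NN, fvF, List.mem_append] at h
    rcases h with h | h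
    · have := ih _ _ h; simp [fvs] at this
    · have := ih _ _ h; simpa [fvs] using this

theorem noEps_NN (n : ℕ) (t : Tr) : noEpsF (NN n t) = true := by
  induction n generalizing t with
  | zero => simp [NN, fI, noEpsF, noEpsTs]
  | succ n ih => simp [NN, noEpsF, ih]

theorem sz_NN (n : ℕ) (t : Tr) : szF (NN n t) ≤ 4 ^ n * (szT t.toTm + 2) := by
  induction n generalizing t with
  | zero => simp [NN, fI, szF, szTs]; omega
  | succ n ih =>
    have h1 := ih (bv 0)
    have h2 := ih (app (t.lift 0) (bv 0))
    have h3 := szT_pos t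
    simp only [toTm, szT, szTs, szT_lift] at h1 h2
    simp only [NN, szF, pow_succ]
    have h4 : 1 ≤ 4 ^ n := Nat.one_le_pow _ _ (by norm_num)
    nlinarith

/-! ### the hypotheses -/
def axZ : Fm := fI zer
def axS : Fm := NN 1 suc
def ax2 : Fm := .all (.all (fE (app (app two (bv 1)) (bv 0)) (app (bv 1) (app (bv 1) (bv 0)))))
def axC : Fm := .all (.all (.all (.imp (fE (bv 2) (bv 1))
  (fE (app (bv 2) (bv 0)) (app (bv 1) (bv 0))))))
def axI : Fm := .all (.all (.imp (fE (bv 1) (bv 0)) (.imp (fI (bv 0)) (fI (bv 1)))))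

/-! ### bounded provability -/

def Prov (C : Fm) (n : ℕ) (Γ : List Fm) (A : Fm) : Prop :=
  ∃ d : Deriv Γ [A], d.Std ∧ d.size ≤ n ∧ ∀ B ∈ d.cutFms, B = C

namespace Prov
variable {C : Fm}

theorem mono {n m : ℕ} {Γ A} (h : Prov C n Γ A) (hnm : n ≤ m) : Prov C m Γ A := by
  obtain ⟨d, h1, h2, h3⟩ := h
  exact ⟨d, h1, h2.trans hnm, h3⟩

theorem perm {n : ℕ} {Γ Γ' A} (h : Prov C n Γ A) (p : Γ.Perm Γ') : Prov C (n+1) Γ' A := by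
  obtain ⟨d, h1, h2, h3⟩ := h
  exact ⟨.permL _ _ _ p d, h1, by simpa [Deriv.size] using h2, h3⟩

theorem weak {n : ℕ} {Γ A} (h : Prov C n Γ A) (B : Fm) : Prov C (n+1) (B :: Γ) A := by
  obtain ⟨d, h1, h2, h3⟩ := h
  exact ⟨.wL B _ _ d, h1, by simpa [Deriv.size] using h2, h3⟩

theorem contr {n : ℕ} {Γ A B} (h : Prov C n (B :: B :: Γ) A) : Prov C (n+1) (B :: Γ) A := by
  obtain ⟨d, h1, h2, h3⟩ := h
  exact ⟨.cL B _ _ d, h1, by simpa [Deriv.size] using h2, h3⟩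

theorem weaks {n : ℕ} {Γ A} (h : Prov C n Γ A) (Γ' : List Fm) :
    Prov C (n+Γ'.length) (Γ' ++ Γ) A := by
  induction Γ' with
  | nil => simpa using h
  | cons B Γ' ih => exact (ih.weak B).mono (by simp only [List.length_cons]; omega)

theorem contr_mem {n : ℕ} {Γ' Γ A B} (hB : B ∈ Γ') (h : Prov C n (Γ' ++ B :: Γ) A) :
    Prov C (n+3) (Γ' ++ Γ) A := by
  obtain ⟨Γ'', p⟩ : ∃ Γ'', Γ'.Perm (B :: Γ'') := by
    obtain ⟨s, t, rfl⟩ := List.append_of_mem hB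
    exact ⟨s ++ t, List.perm_middle⟩
  have p1 : (Γ' ++ B :: Γ).Perm (B :: B :: (Γ'' ++ Γ)) :=
    List.perm_middle.trans ((p.append_right Γ).cons B)
  have p2 : (B :: (Γ'' ++ Γ)).Perm (Γ' ++ Γ) := (p.append_right Γ).symm
  exact ((h.perm p1).contr).perm p2

theorem contrs {n : ℕ} {Γ' Γ A} (hB : Γ ⊆ Γ') (h : Prov C n (Γ' ++ Γ) A) :
    Prov C (n+3*Γ.length) Γ' A := by
  induction Γ generalizing n with
  | nil => simpa using h
  | cons B Γ ih =>
    have h1 := contr_mem (hB (by simp)) h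
    exact (ih (fun x hx => hB (by simp [hx])) h1).mono (by simp; omega)

theorem subset {n : ℕ} {Γ Γ' A} (h : Prov C n Γ A) (hs : Γ ⊆ Γ') :
    Prov C (n + (Γ'.length + 3 * Γ.length)) Γ' A :=
  ((h.weaks Γ').contrs hs).mono (by omega)

theorem ax {Γ A} (h : A ∈ Γ) : Prov C (Γ.length + 4) Γ A := by
  have h1 : Prov C 1 [A] A := ⟨.ax A, trivial, by simp [Deriv.size], by simp [Deriv.cutFms]⟩
  exact (h1.subset (Γ' := Γ) (by simpa using h)).mono (by simp; omega)

theorem impR {n : ℕ} {Γ A B} (h : Prov C n (A :: Γ) B) : Prov C (n+1) Γ (.imp A B) := by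
  obtain ⟨d, h1, h2, h3⟩ := h
  exact ⟨.impR A B _ _ d, h1, by simpa [Deriv.size] using h2, h3⟩

theorem allR {n : ℕ} {Γ A} (a : ℕ) (h : Prov C n Γ (inst0 A (.fvar a)))
    (ha : a ∉ fvSeq Γ [Fm.all A]) : Prov C (n+1) Γ (.all A) := by
  obtain ⟨d, h1, h2, h3⟩ := h
  exact ⟨.allR a A _ _ d, ⟨ha, h1⟩, by simpa [Deriv.size] using h2, h3⟩

theorem allL {n : ℕ} {Γ A B} (t : Tm) (hA : Fm.all A ∈ Γ) (h : Prov C n (inst0 A t :: Γ) B) :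
    Prov C (n+4*Γ.length+4) Γ B := by
  obtain ⟨d, h1, h2, h3⟩ := h
  have h4 : Prov C (n+1) (.all A :: Γ) B :=
    ⟨.allL t A _ _ d, h1, by simpa [Deriv.size] using h2, h3⟩
  exact (h4.subset (Γ' := Γ) (by simp [hA])).mono (by simp; omega)

theorem impL {n m : ℕ} {Γ A B D} (hA : Fm.imp A B ∈ Γ) (h : Prov C n Γ A)
    (h' : Prov C m (B :: Γ) D) : Prov C (n+m+7*Γ.length+4) Γ D := by
  obtain ⟨d, h1, h2, h3⟩ := h
  obtain ⟨e, e1, e2, e3⟩ := h'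
  have h4 : Prov C (n+m+1) (.imp A B :: (Γ ++ Γ)) D :=
    ⟨.impL A B Γ [] Γ [D] d e, ⟨h1, e1⟩, by simp [Deriv.size]; omega, by
      intro B hB
      simp only [Deriv.cutFms, List.mem_append] at hB
      exact hB.elim (h3 B) (e3 B)⟩
  exact (h4.subset (Γ' := Γ) (by simp [hA])).mono (by simp; omega)

theorem cut {n m : ℕ} {Γ D} (h : Prov C n Γ C)
    (h' : Prov C m (C :: Γ) D) : Prov C (n+m+7*Γ.length+4) Γ D := by
  obtain ⟨d, h1, h2, h3⟩ := h
  obtain ⟨e, e1, e2, e3⟩ := h'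
  have h4 : Prov C (n+m+1) (Γ ++ Γ) D :=
    ⟨.cut C Γ [] Γ [D] d e, ⟨h1, e1⟩, by simp [Deriv.size]; omega, by
      intro B hB
      simp only [Deriv.cutFms, List.mem_append, List.mem_cons] at hB
      rcases hB with hB | hB | hB
      · exact hB
      · exact h3 B hB
      · exact e3 B hB⟩
  exact (h4.subset (Γ' := Γ) (by simp)).mono (by simp; omega)

end Prov

theorem inst_NN (n : ℕ) (t u : Tr) :
    inst0 (.imp (NN n (bv 0)) (NN n (app (t.lift 0) (bv 0)))) u.toTm
      = .imp (NN n u) (NN n (app t u)) := by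
  simp [inst0, subF, sub_NN, sub]

theorem Prov.NNL {C : Fm} {k n m : ℕ} {Γ B} (t u : Tr) (h : NN (n+1) t ∈ Γ)
    (h1 : Prov C k (.imp (NN n u) (NN n (app t u)) :: Γ) (NN n u))
    (h2 : Prov C m (NN n (app t u) :: .imp (NN n u) (NN n (app t u)) :: Γ) B) :
    Prov C (k + m + 11 * Γ.length + 15) Γ B := by
  refine (Prov.allL u.toTm h (n := k+m+7*(Γ.length+1)+4) ?_).mono (by omega)
  rw [inst_NN]
  exact Prov.impL (by simp) h1 h2

theorem Prov.NNR {C : Fm} {k n c : ℕ} {Γ} (t : Tr) 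
    (hΓ : ∀ A ∈ Γ, ∀ v ∈ fvF A, v < c) (ht : ∀ v ∈ t.fvs, v < c)
    (h : Prov C k (NN n (fv c) :: Γ) (NN n (app t (fv c)))) :
    Prov C (k+2) Γ (NN (n+1) t) := by
  refine Prov.allR c (n := k+1) ?_ ?_
  · have := inst_NN n t (fv c)
    simp only [toTm] at this ⊢
    rw [this]
    exact h.impR
  · intro hc
    have key : ∀ L : List Fm, (∀ A ∈ L, ∀ v ∈ fvF A, v < c) →
        c ∉ L.foldr (fun A l => fvF A ++ l) [] := by
      intro L
      induction L with
      | nil => simp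
      | cons A L ih =>
        intro hL hc
        simp only [List.foldr_cons, List.mem_append] at hc
        rcases hc with hc | hc
        · exact absurd (hL A (by simp) _ hc) (by omega)
        · exact ih (fun A hA => hL A (by simp [hA])) hc
    refine key _ ?_ hc
    intro A hA v hv
    simp only [List.mem_append, List.mem_singleton] at hA
    rcases hA with hA | rfl
    · exact hΓ A hA v hv
    · exact ht v (fv_NN (n+1) t v hv)

theorem fv_axC : fvF axC = [] := by simp [axC, fvF, fE, fvTs, fvs]
theorem fv_axI : fvF axI = [] := by simp [axI, fvF, fE, fI, fvTs, fvs]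
theorem fv_ax2 : fvF ax2 = [] := by simp [ax2, fvF, fE, fvTs, fvs]
theorem fv_fE (a b : Tr) : fvF (fE a b) = a.fvs ++ b.fvs := by simp [fvF, fE, fvTs]

theorem sub_lift_one (t u : Tr) :
    (t.lift 0).sub 1 (u.lift 0) = (t.sub 0 u).lift 0 := sub_lift_succ 0 t u
theorem sub_lift_two (t u : Tr) :
    (t.lift 0).sub 2 (u.lift 0) = (t.sub 1 u).lift 0 := sub_lift_succ 1 t u

theorem Prov.useC {C : Fm} {k : ℕ} {Γ B} (x y z : Tr) (h : axC ∈ Γ) (h2 : fE x y ∈ Γ)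
    (h1 : Prov C k (fE (app x z) (app y z) :: Γ) B) :
    Prov C (k + 40 * Γ.length + 100) Γ B := by
  refine (Prov.allL x.toTm h (n := k+32*Γ.length+95) ?_).mono (by omega)
  refine (Prov.allL y.toTm (by simp [inst0, subF]; exact Or.inl rfl) (n := k+27*Γ.length+80) ?_).mono
    (by simp; omega)
  refine (Prov.allL z.toTm (by simp [inst0, subF]; exact Or.inl rfl) (n := k+20*Γ.length+60) ?_).mono
    (by simp; omega)
  simp only [inst0, subF, sub_fE, liftT_toTm]
  simp only [sub]
  simp only [zero_add, Nat.reduceAdd, Nat.reduceEqDiff, if_true, if_false, Nat.reduceLT,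
    OfNat.ofNat_ne_zero, sub_lift, sub_lift_one, sub_lift_two, sub, lt_self_iff_false]
  refine (Prov.impL (n := Γ.length + 7) (m := k+4*Γ.length+16) (List.mem_cons_self ..) ?_ ?_).mono ?_
  · exact (Prov.ax (by simp [h2])).mono (by simp)
  · exact (h1.subset (by intro A hA; simp at hA ⊢; tauto)).mono (by simp; omega)
  · simp; omega

theorem Prov.use2 {C : Fm} {k : ℕ} {Γ B} (f x : Tr) (h : ax2 ∈ Γ)
    (h1 : Prov C k (fE (app (app two f) x) (app f (app f x)) :: Γ) B) :
    Prov C (k + 20 * Γ.length + 40) Γ B := by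
  refine (Prov.allL f.toTm h (n := k+12*Γ.length+30) ?_).mono (by omega)
  refine (Prov.allL x.toTm (by simp [inst0, subF]; exact Or.inl rfl) (n := k+5*Γ.length+10) ?_).mono
    (by simp; omega)
  simp only [inst0, subF, sub_fE, liftT_toTm]
  simp only [sub, zero_add, if_true, sub_lift]
  simp only [Nat.reduceEqDiff, if_false, Nat.reduceLT, sub, sub_lift, zero_ne_one, zero_lt_one,
    if_true]
  exact (h1.subset (by intro A hA; simp at hA ⊢; tauto)).mono (by simp; omega)

theorem Prov.useI {C : Fm} {Γ} (x y : Tr) (h : axI ∈ Γ) (h2 : fE x y ∈ Γ) (h3 : fI y ∈ Γ) :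
    Prov C (40 * Γ.length + 200) Γ (fI x) := by
  refine (Prov.allL x.toTm h (n := 32*Γ.length+180) ?_).mono (by omega)
  refine (Prov.allL y.toTm (by simp [inst0, subF]; exact Or.inl rfl) (n := 27*Γ.length+160) ?_).mono
    (by simp; omega)
  simp only [inst0, subF, sub_fE, sub_fI, liftT_toTm]
  simp only [sub, zero_add, if_true, sub_lift]
  simp only [Nat.reduceEqDiff, if_false, Nat.reduceLT, sub, sub_lift, zero_ne_one, zero_lt_one,
    if_true]
  refine (Prov.impL (n := Γ.length + 6) (m := 10*Γ.length+80) (List.mem_cons_self ..) ?_ ?_).mono ?_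
  · exact (Prov.ax (by simp [h2])).mono (by simp)
  · refine (Prov.impL (n := Γ.length + 7) (m := Γ.length+8) (List.mem_cons_self ..) ?_ ?_).mono ?_
    · exact (Prov.ax (by simp [h3])).mono (by simp)
    · exact (Prov.ax (by simp)).mono (by simp)
    · simp; omega
  · simp; omega

/-- transport along `E` -/
theorem transport (C : Fm) (n : ℕ) : ∀ (a b : Tr) (c : ℕ),
    (∀ v ∈ a.fvs, v < c) → (∀ v ∈ b.fvs, v < c) →
    Prov C (1000 * (n+1)) [axC, axI, fE a b, NN n b] (NN n a) := by
  induction n with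
  | zero =>
    intro a b c _ _
    exact (Prov.useI a b (by simp) (by simp) (by simp [NN])).mono (by simp)
  | succ n ih =>
    intro a b c ha hb
    refine (Prov.NNR (c := c) (k := 1000 * (n+1) + 900) a ?_ ha ?_).mono (by omega)
    · intro A hA v hv
      simp only [List.mem_cons, List.not_mem_nil, or_false] at hA
      rcases hA with rfl | rfl | rfl | rfl
      · simp [fv_axC] at hv
      · simp [fv_axI] at hv
      · rw [fv_fE, List.mem_append] at hv
        exact hv.elim (ha v) (hb v)
      · exact hb v (fv_NN _ _ _ hv)
    · refine (Prov.useC a b (fv c) (by simp) (by simp) (k := 1000 * (n+1) + 600) ?_).mono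
        (by simp)
      refine (Prov.NNL b (fv c) (n := n) (by simp) (k := 30) (m := 1000 * (n+1) + 100) ?_ ?_).mono
        (by simp; omega)
      · exact (Prov.ax (by simp)).mono (by simp)
      · refine ((ih (app a (fv c)) (app b (fv c)) (c+1) ?_ ?_).subset ?_).mono ?_
        · intro v hv
          simp only [fvs, List.mem_append, List.mem_singleton] at hv
          rcases hv with hv | hv
          · have := ha v hv; omega
          · omega
        · intro v hv
          simp only [fvs, List.mem_append, List.mem_singleton] at hv
          rcases hv with hv | hv
          · have := hb v hv; omega
          · omega
        · simp
        · simp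

/-- derivation of `N_{n+2}(2)` -/
theorem prov_two (C : Fm) (n : ℕ) :
    Prov C (1000 * (n+3)) [ax2, axC, axI] (NN (n+2) two) := by
  refine (Prov.NNR (c := 0) (k := 1000 * (n+1) + 1900) two ?_ (by simp [fvs]) ?_).mono (by omega)
  · intro A hA v hv
    simp only [List.mem_cons, List.not_mem_nil, or_false] at hA
    rcases hA with rfl | rfl | rfl
    · simp [fv_ax2] at hv
    · simp [fv_axC] at hv
    · simp [fv_axI] at hv
  refine (Prov.NNR (c := 1) (k := 1000 * (n+1) + 1800) _ ?_ (by simp [fvs]) ?_).mono (by omega)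
  · intro A hA v hv
    simp only [List.mem_cons, List.not_mem_nil, or_false] at hA
    rcases hA with rfl | rfl | rfl | rfl
    · have := fv_NN _ _ _ hv
      simp [fvs] at this; omega
    · simp [fv_ax2] at hv
    · simp [fv_axC] at hv
    · simp [fv_axI] at hv
  refine (Prov.NNL (fv 0) (fv 1) (n := n) (by simp) (k := 10) (m := 1000 * (n+1) + 1600) ?_ ?_).mono
        (by simp; omega)
  · exact (Prov.ax (by simp)).mono (by simp)
  refine (Prov.NNL (fv 0) (app (fv 0) (fv 1)) (n := n) (by simp) (k := 20) (m := 1000 * (n+1) + 1400)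
    ?_ ?_).mono (by simp; omega)
  · exact (Prov.ax (by simp)).mono (by simp)
  refine (Prov.use2 (fv 0) (fv 1) (by simp) (k := 1000 * (n+1) + 200) ?_).mono (by simp)
  exact ((transport C n (app (app two (fv 0)) (fv 1)) (app (fv 0) (app (fv 0) (fv 1))) 2
    (by simp [fvs]) (by simp [fvs])).subset (by simp)).mono (by simp)

/-- the main linear part -/
theorem prov_main (C : Fm) (n : ℕ) : ∀ t : Tr,
    Prov C (1000 * (n+3)^2) [NN (n+2) t, axZ, axS, ax2, axC, axI]
      (fI (app (app (twos n t) suc) zer)) := by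
  induction n with
  | zero =>
    intro t
    refine (Prov.NNL t suc (n := 1) (by simp) (k := 20) (m := 600) ?_ ?_).mono (by simp)
    · exact (Prov.ax (by simp [axS])).mono (by simp)
    refine (Prov.NNL (app t suc) zer (n := 0) (by simp) (k := 20) (m := 20) ?_ ?_).mono (by simp)
    · exact (Prov.ax (by simp [axZ, NN])).mono (by simp)
    · exact (Prov.ax (by simp [NN, twos])).mono (by simp)
  | succ n ih =>
    intro t
    refine (Prov.NNL t two (n := n+2) (by simp) (k := 1000 * (n+3) + 100)
      (m := 1000 * (n+3)^2 + 100) ?_ ?_).mono (by simp; nlinarith)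
    · exact ((prov_two C n).subset (by simp)).mono (by simp)
    · exact ((ih (app t two)).subset (by simp)).mono (by simp)

theorem prov_final (n : ℕ) :
    Prov (NN (n+2) two) (3000 * (n+3)^2) [axZ, axS, ax2, axC, axI]
      (fI (app (app (twos n two) suc) zer)) := by
  refine (Prov.cut (n := 1000 * (n+3) + 100) (m := 1000 * (n+3)^2) ?_ (prov_main _ n two)).mono
    (by simp; nlinarith)
  exact ((prov_two _ n).subset (by simp)).mono (by simp)

/-! ### tautologies -/
inductive TautF : Fm → Prop where
  | base (A : Fm) : qfree A = true → noEpsF A = true → TautF (.imp A A)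
  | all {A : Fm} : TautF A → TautF (.all A)

mutual
theorem noEps_abT (a k : ℕ) : ∀ t, noEpsT t = true → noEpsT (abT a k t) = true
  | .bvar _, _ => rfl
  | .fvar b, _ => by simp only [abT]; split <;> rfl
  | .func f ts, h => by simpa [abT, noEpsT] using noEps_abTs a k ts (by simpa [noEpsT] using h)
  | .eps A, h => by simp [noEpsT] at h
theorem noEps_abTs (a k : ℕ) : ∀ t, noEpsTs t = true → noEpsTs (abTs a k t) = true
  | .nil, _ => rfl
  | .cons t ts, h => by
    simp only [noEpsTs, Bool.and_eq_true] at h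
    simp [abTs, noEpsTs, noEps_abT a k t h.1, noEps_abTs a k ts h.2]
end

theorem qfree_abF (a k : ℕ) : ∀ A, qfree A = true → noEpsF A = true →
    qfree (abF a k A) = true ∧ noEpsF (abF a k A) = true
  | .atom p ts, _, h => by
    simpa [abF, qfree, noEpsF] using noEps_abTs a k ts (by simpa [noEpsF] using h)
  | .and A B, h, h' => by
    simp only [qfree, noEpsF, Bool.and_eq_true] at h h'
    simp [abF, qfree, noEpsF, qfree_abF a k A h.1 h'.1, qfree_abF a k B h.2 h'.2]
  | .or A B, h, h' => by
    simp only [qfree, noEpsF, Bool.and_eq_true] at h h'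
    simp [abF, qfree, noEpsF, qfree_abF a k A h.1 h'.1, qfree_abF a k B h.2 h'.2]
  | .imp A B, h, h' => by
    simp only [qfree, noEpsF, Bool.and_eq_true] at h h'
    simp [abF, qfree, noEpsF, qfree_abF a k A h.1 h'.1, qfree_abF a k B h.2 h'.2]
  | .not A, h, h' => by
    simp only [qfree, noEpsF] at h h'
    simp [abF, qfree, noEpsF, qfree_abF a k A h h']
  | .all A, h, _ => by simp [qfree] at h
  | .ex A, h, _ => by simp [qfree] at h

theorem TautF.ab (a : ℕ) {A : Fm} (h : TautF A) : ∀ k, TautF (abF a k A) := by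
  induction h with
  | base A h1 h2 =>
    intro k
    obtain ⟨h3, h4⟩ := qfree_abF a k A h1 h2
    exact .base _ h3 h4
  | all _ ih => intro k; exact .all (ih (k+1))

theorem TautF.uclose {A : Fm} (h : TautF A) : TautF (uclose A) := by
  unfold EpsCalc.uclose
  generalize (fvF A).dedup = l
  induction l with
  | nil => exact h
  | cons a l ih => exact .all (ih.ab a 0)

mutual
theorem qfree_negW : ∀ A, qfree A = true → negW A = true
  | .atom p ts, _ => rfl
  | .and A B, h => by
    simp only [qfree, Bool.and_eq_true] at h
    simp [negW, qfree_negW A h.1, qfree_negW B h.2]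
  | .or A B, h => by
    simp only [qfree, Bool.and_eq_true] at h
    simp [negW, qfree_negW A h.1, qfree_negW B h.2]
  | .imp A B, h => by
    simp only [qfree, Bool.and_eq_true] at h
    simp [negW, qfree_posW A h.1, qfree_negW B h.2]
  | .not A, h => by
    simp only [qfree] at h
    simp [negW, qfree_posW A h]
  | .all A, h => by simp [qfree] at h
  | .ex A, h => by simp [qfree] at h
theorem qfree_posW : ∀ A, qfree A = true → posW A = true
  | .atom p ts, _ => rfl
  | .and A B, h => by
    simp only [qfree, Bool.and_eq_true] at h
    simp [posW, qfree_posW A h.1, qfree_posW B h.2]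
  | .or A B, h => by
    simp only [qfree, Bool.and_eq_true] at h
    simp [posW, qfree_posW A h.1, qfree_posW B h.2]
  | .imp A B, h => by
    simp only [qfree, Bool.and_eq_true] at h
    simp [posW, qfree_negW A h.1, qfree_posW B h.2]
  | .not A, h => by
    simp only [qfree] at h
    simp [posW, qfree_negW A h]
  | .all A, h => by simp [qfree] at h
  | .ex A, h => by simp [qfree] at h
end

theorem TautF.negW {A : Fm} (h : TautF A) : negW A = true := by
  induction h with
  | base A h1 h2 => simp [EpsCalc.negW, qfree_negW A h1, qfree_posW A h1]
  | all _ ih => simpa [EpsCalc.negW] using ih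

theorem TautF.fo {A : Fm} (h : TautF A) : isFO A = true := by
  unfold isFO
  induction h with
  | base A h1 h2 => simp [noEpsF, h2]
  | all _ ih => simpa [noEpsF] using ih

mutual
theorem mxT_props (b d : ℕ) : ∀ t, noEpsT t = true →
    noEpsT (mxT b d t) = true ∧ szT (mxT b d t) ≤ szT t
  | .bvar n, _ => by simp only [mxT]; split <;> simp [noEpsT, szT]
  | .fvar _, _ => by simp [mxT, noEpsT, szT]
  | .func f ts, h => by
    have := mxTs_props b d ts (by simpa [noEpsT] using h)
    simpa [mxT, noEpsT, szT] using this
  | .eps A, h => by simp [noEpsT] at h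
theorem mxTs_props (b d : ℕ) : ∀ t, noEpsTs t = true →
    noEpsTs (mxTs b d t) = true ∧ szTs (mxTs b d t) ≤ szTs t
  | .nil, _ => by simp [mxTs, noEpsTs, szTs]
  | .cons t ts, h => by
    simp only [noEpsTs, Bool.and_eq_true] at h
    have h1 := mxT_props b d t h.1
    have h2 := mxTs_props b d ts h.2
    simp only [mxTs, noEpsTs, szTs, h1, h2, Bool.and_self, true_and]
    omega
end

theorem mxF_props (b : ℕ) : ∀ (A : Fm) (d : ℕ), noEpsF A = true →
    qfree (mxF b d A) = true ∧ noEpsF (mxF b d A) = true ∧ szF (mxF b d A) ≤ szF A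
  | .atom p ts, d, h => by
    have := mxTs_props b d ts (by simpa [noEpsF] using h)
    simpa [mxF, qfree, noEpsF, szF] using this
  | .and A B, d, h => by
    simp only [noEpsF, Bool.and_eq_true] at h
    have h1 := mxF_props b A d h.1
    have h2 := mxF_props b B d h.2
    simp only [mxF, qfree, noEpsF, szF, h1, h2, Bool.and_self, true_and]
    omega
  | .or A B, d, h => by
    simp only [noEpsF, Bool.and_eq_true] at h
    have h1 := mxF_props b A d h.1
    have h2 := mxF_props b B d h.2
    simp only [mxF, qfree, noEpsF, szF, h1, h2, Bool.and_self, true_and]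
    omega
  | .imp A B, d, h => by
    simp only [noEpsF, Bool.and_eq_true] at h
    have h1 := mxF_props b A d h.1
    have h2 := mxF_props b B d h.2
    simp only [mxF, qfree, noEpsF, szF, h1, h2, Bool.and_self, true_and]
    omega
  | .not A, d, h => by
    simp only [noEpsF] at h
    have h1 := mxF_props b A d h
    simp only [mxF, qfree, noEpsF, szF, h1, true_and]
    omega
  | .all A, d, h => by
    simp only [noEpsF] at h
    have h1 := mxF_props b A (d+1) h
    simp only [mxF, szF, h1, true_and]
    omega
  | .ex A, d, h => by
    simp only [noEpsF] at h
    have h1 := mxF_props b A (d+1) h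
    simp only [mxF, szF, h1, true_and]
    omega

mutual
theorem sz_abT (a k : ℕ) : ∀ t, szT (abT a k t) = szT t
  | .bvar _ => rfl
  | .fvar b => by simp only [abT]; split <;> rfl
  | .func f ts => by simp [abT, szT, sz_abTs a k ts]
  | .eps A => by simp [abT, szT, sz_abF a (k+1) A]
theorem sz_abTs (a k : ℕ) : ∀ t, szTs (abTs a k t) = szTs t
  | .nil => rfl
  | .cons t ts => by simp [abTs, szTs, sz_abT a k t, sz_abTs a k ts]
theorem sz_abF (a k : ℕ) : ∀ t, szF (abF a k t) = szF t
  | .atom p ts => by simp [abF, szF, sz_abTs a k ts]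
  | .and A B => by simp [abF, szF, sz_abF a k A, sz_abF a k B]
  | .or A B => by simp [abF, szF, sz_abF a k A, sz_abF a k B]
  | .imp A B => by simp [abF, szF, sz_abF a k A, sz_abF a k B]
  | .not A => by simp [abF, szF, sz_abF a k A]
  | .all A => by simp [abF, szF, sz_abF a (k+1) A]
  | .ex A => by simp [abF, szF, sz_abF a (k+1) A]
end

mutual
theorem len_fvT : ∀ t, (fvT t).length ≤ szT t
  | .bvar _ => by simp [fvT]
  | .fvar b => by simp [fvT, szT]
  | .func f ts => by have := len_fvTs ts; simp only [fvT, szT]; omega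
  | .eps A => by have := len_fvF A; simp only [fvT, szT]; omega
theorem len_fvTs : ∀ t, (fvTs t).length ≤ szTs t
  | .nil => by simp [fvTs]
  | .cons t ts => by
    have := len_fvT t; have := len_fvTs ts
    simp only [fvTs, szTs, List.length_append]; omega
theorem len_fvF : ∀ t, (fvF t).length ≤ szF t
  | .atom p ts => by have := len_fvTs ts; simp only [fvF, szF]; omega
  | .and A B => by
    have := len_fvF A; have := len_fvF B; simp only [fvF, szF, List.length_append]; omega
  | .or A B => by
    have := len_fvF A; have := len_fvF B; simp only [fvF, szF, List.length_append]; omega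
  | .imp A B => by
    have := len_fvF A; have := len_fvF B; simp only [fvF, szF, List.length_append]; omega
  | .not A => by have := len_fvF A; simp only [fvF, szF]; omega
  | .all A => by have := len_fvF A; simp only [fvF, szF]; omega
  | .ex A => by have := len_fvF A; simp only [fvF, szF]; omega
end

theorem sz_uclose (A : Fm) : szF (uclose A) ≤ 2 * szF A := by
  have key : ∀ l : List ℕ, szF (l.foldr (fun a B => Fm.all (abF a 0 B)) A) = szF A + l.length := by
    intro l
    induction l with
    | nil => rfl
    | cons a l ih => simp only [List.foldr_cons, szF, sz_abF, ih, List.length_cons]; omega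
  have h1 := (List.dedup_sublist (fvF A)).length_le
  have h2 := len_fvF A
  unfold uclose
  rw [key]
  omega

/-- the tautology associated to the cut formula -/
def tautOf (n : ℕ) : Fm := uclose (.imp (matrix (NN (n+2) two)) (matrix (NN (n+2) two)))

theorem tautOf_taut (n : ℕ) : TautF (tautOf n) := by
  have := mxF_props (maxFv (NN (n+2) two) + 1) (NN (n+2) two) 0 (noEps_NN _ _)
  exact (TautF.base _ this.1 this.2.1).uclose

theorem sz_tautOf (n : ℕ) : szF (tautOf n) ≤ 300 * 4 ^ n := by
  have h1 := (mxF_props (maxFv (NN (n+2) two) + 1) (NN (n+2) two) 0 (noEps_NN _ _)).2.2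
  have h2 := sz_NN (n+2) two
  have h3 := sz_uclose (.imp (matrix (NN (n+2) two)) (matrix (NN (n+2) two)))
  have h4 : 1 ≤ 4 ^ n := Nat.one_le_pow _ _ (by norm_num)
  simp only [toTm, szT, szTs, szF, matrix, pow_succ] at h1 h2 h3
  unfold tautOf
  simp only [matrix]
  omega

/-! ### the model -/

/-- finite types over `ℕ` -/
def DD : ℕ → Type
  | 0 => ℕ
  | n+1 => DD n → DD n

def dflt : (n : ℕ) → DD n
  | 0 => (0 : ℕ)
  | _+1 => fun x => x

def UU : Type := (n : ℕ) → DD n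

def uApp (f x : UU) : UU := fun n => (f (n+1) : DD n → DD n) (x n)

def uTwo : UU
  | 0 => dflt 0
  | 1 => dflt 1
  | _+2 => fun f x => f (f x)

def uSuc : UU
  | 0 => dflt 0
  | 1 => Nat.succ
  | n+2 => dflt (n+2)

def uDflt : UU := dflt

def iFun (k : ℕ) (l : List UU) : UU :=
  if k = 0 then (match l with
    | [f, x] => uApp f x
    | _ => uDflt)
  else if k = 1 then uTwo
  else if k = 2 then uSuc
  else uDflt

def base (u : UU) : ℕ := u 0

def iPred (v : ℕ) : ℕ → List UU → Prop
  | 0, [u] => base u ≤ v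
  | 1, [a, b] => a = b
  | _, _ => True

def consE (u : UU) (e : ℕ → UU) : ℕ → UU
  | 0 => u
  | n+1 => e n

mutual
def evT (e : ℕ → UU) : Tm → UU
  | .bvar n => e n
  | .fvar _ => uDflt
  | .func f ts => iFun f (evTs e ts)
  | .eps _ => uDflt
def evTs (e : ℕ → UU) : Tms → List UU
  | .nil => []
  | .cons t ts => evT e t :: evTs e ts
end

def Sat (v : ℕ) : (ℕ → UU) → Fm → Prop
  | e, .atom p ts => iPred v p (evTs e ts)
  | e, .and A B => Sat v e A ∧ Sat v e B
  | e, .or A B => Sat v e A ∨ Sat v e B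
  | e, .imp A B => Sat v e A → Sat v e B
  | e, .not A => ¬ Sat v e A
  | e, .all A => ∀ u, Sat v (consE u e) A
  | e, .ex A => ∃ u, Sat v (consE u e) A

section
variable {v : ℕ} {e : ℕ → UU} {A B : Fm}
theorem Sat_and : Sat v e (.and A B) ↔ Sat v e A ∧ Sat v e B := by rw [Sat]
theorem Sat_or : Sat v e (.or A B) ↔ Sat v e A ∨ Sat v e B := by rw [Sat]
theorem Sat_imp : Sat v e (.imp A B) ↔ (Sat v e A → Sat v e B) := by rw [Sat]
theorem Sat_not : Sat v e (.not A) ↔ ¬ Sat v e A := by rw [Sat]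
theorem Sat_all : Sat v e (.all A) ↔ ∀ u, Sat v (consE u e) A := by rw [Sat]
theorem Sat_ex : Sat v e (.ex A) ↔ ∃ u, Sat v (consE u e) A := by rw [Sat]
end

theorem iFun_app (f x : UU) : iFun 0 [f, x] = uApp f x := if_pos rfl
theorem iFun_two : iFun 1 [] = uTwo := by
  unfold iFun
  rw [if_neg (by decide), if_pos rfl]
theorem iFun_suc : iFun 2 [] = uSuc := by
  unfold iFun
  rw [if_neg (by decide), if_neg (by decide), if_pos rfl]
theorem iFun_zer : iFun 3 [] = uDflt := by
  unfold iFun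
  rw [if_neg (by decide), if_neg (by decide), if_neg (by decide)]
theorem iPred_I (v : ℕ) (u : UU) : iPred v 0 [u] ↔ base u ≤ v := by rw [iPred]
theorem iPred_E (v : ℕ) (a b : UU) : iPred v 1 [a, b] ↔ a = b := by rw [iPred]

/-- direct evaluation of simple terms -/
def evR (e : ℕ → UU) : Tr → UU
  | bv n => e n
  | fv _ => uDflt
  | two => uTwo
  | suc => uSuc
  | zer => uDflt
  | app f x => uApp (evR e f) (evR e x)

theorem evT_toTm (e : ℕ → UU) (t : Tr) : evT e t.toTm = evR e t := by
  induction t with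
  | app f x hf hx => rw [toTm, evT, evTs, evTs, evTs, iFun_app, hf, hx, evR]
  | bv n => rw [toTm, evT, evR]
  | fv n => rw [toTm, evT, evR]
  | two => rw [toTm, evT, evTs, iFun_two, evR]
  | suc => rw [toTm, evT, evTs, iFun_suc, evR]
  | zer => rw [toTm, evT, evTs, iFun_zer, evR]

theorem Sat_fI (v : ℕ) (e : ℕ → UU) (t : Tr) : Sat v e (fI t) ↔ base (evR e t) ≤ v := by
  rw [fI, Sat, evTs, evTs, iPred_I, evT_toTm]

theorem Sat_fE (v : ℕ) (e : ℕ → UU) (a b : Tr) : Sat v e (fE a b) ↔ evR e a = evR e b := by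
  rw [fE, Sat, evTs, evTs, evTs, iPred_E, evT_toTm, evT_toTm]

theorem base_suc (u : UU) : base (uApp uSuc u) = base u + 1 := rfl

mutual
theorem evT_lift (u : UU) (e : ℕ → UU) : ∀ t, evT (consE u e) (liftT 0 t) = evT e t
  | .bvar n => by simp [liftT, evT, consE]
  | .fvar _ => rfl
  | .func f ts => by simp [liftT, evT, evTs_lift u e ts]
  | .eps _ => rfl
theorem evTs_lift (u : UU) (e : ℕ → UU) : ∀ t, evTs (consE u e) (liftTs 0 t) = evTs e t
  | .nil => rfl
  | .cons t ts => by simp [liftTs, evTs, evT_lift u e t, evTs_lift u e ts]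
end

def insE (k : ℕ) (u : UU) (e : ℕ → UU) : ℕ → UU :=
  fun n => if n = k then u else if n < k then e n else e (n-1)

theorem insE_zero (u : UU) (e : ℕ → UU) : insE 0 u e = consE u e := by
  funext n
  cases n <;> simp [insE, consE]

theorem insE_succ (k : ℕ) (u x : UU) (e : ℕ → UU) :
    insE (k+1) u (consE x e) = consE x (insE k u e) := by
  funext n
  cases n with
  | zero => simp [insE, consE]
  | succ n =>
    simp only [insE, consE, Nat.add_right_cancel_iff, Nat.add_lt_add_iff_right]
    by_cases h1 : n = k
    · simp [h1]
    · by_cases h2 : n < k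
      · simp [h1, h2]
      · obtain ⟨m, rfl⟩ : ∃ m, n = m + 1 := ⟨n - 1, by omega⟩
        simp [h1, h2]

mutual
theorem evT_sub (k : ℕ) (u : Tm) (e : ℕ → UU) :
    ∀ t, evT e (subT k u t) = evT (insE k (evT e u) e) t
  | .bvar n => by
    simp only [subT, evT, insE]
    split
    · rfl
    · split <;> rfl
  | .fvar _ => rfl
  | .func f ts => by simp [subT, evT, evTs_sub k u e ts]
  | .eps _ => rfl
theorem evTs_sub (k : ℕ) (u : Tm) (e : ℕ → UU) :
    ∀ t, evTs e (subTs k u t) = evTs (insE k (evT e u) e) t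
  | .nil => rfl
  | .cons t ts => by simp [subTs, evTs, evT_sub k u e t, evTs_sub k u e ts]
end

theorem sat_sub (v : ℕ) : ∀ (A : Fm) (k : ℕ) (u : Tm) (e : ℕ → UU),
    Sat v e (subF k u A) ↔ Sat v (insE k (evT e u) e) A
  | .atom p ts, k, u, e => by simp [subF, Sat, evTs_sub]
  | .and A B, k, u, e => by simp [subF, Sat, sat_sub v A, sat_sub v B]
  | .or A B, k, u, e => by simp [subF, Sat, sat_sub v A, sat_sub v B]
  | .imp A B, k, u, e => by simp [subF, Sat, sat_sub v A, sat_sub v B]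
  | .not A, k, u, e => by simp [subF, Sat, sat_sub v A]
  | .all A, k, u, e => by simp [subF, Sat, sat_sub v A, evT_lift, insE_succ]
  | .ex A, k, u, e => by simp [subF, Sat, sat_sub v A, evT_lift, insE_succ]

theorem sat_inst (v : ℕ) (A : Fm) (t : Tm) (e : ℕ → UU) :
    Sat v e (inst0 A t) ↔ Sat v (consE (evT e t) e) A := by
  rw [inst0, sat_sub, insE_zero]

mutual
theorem negW_sub : ∀ (A : Fm) (k : ℕ) (u : Tm), negW (subF k u A) = negW A
  | .atom p ts, k, u => rfl
  | .and A B, k, u => by simp [subF, negW, negW_sub A, negW_sub B]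
  | .or A B, k, u => by simp [subF, negW, negW_sub A, negW_sub B]
  | .imp A B, k, u => by simp [subF, negW, posW_sub A, negW_sub B]
  | .not A, k, u => by simp [subF, negW, posW_sub A]
  | .all A, k, u => by simp [subF, negW, negW_sub A]
  | .ex A, k, u => by simp [subF, negW]
theorem posW_sub : ∀ (A : Fm) (k : ℕ) (u : Tm), posW (subF k u A) = posW A
  | .atom p ts, k, u => rfl
  | .and A B, k, u => by simp [subF, posW, posW_sub A, posW_sub B]
  | .or A B, k, u => by simp [subF, posW, posW_sub A, posW_sub B]
  | .imp A B, k, u => by simp [subF, posW, negW_sub A, posW_sub B]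
  | .not A, k, u => by simp [subF, posW, negW_sub A]
  | .all A, k, u => by simp [subF, posW]
  | .ex A, k, u => by simp [subF, posW, posW_sub A]
end

def e0 : ℕ → UU := fun _ => uDflt

/-- the values at which a derivation instantiates universal formulas -/
def bad : ∀ {Γ Δ}, Deriv Γ Δ → List ℕ
  | _, _, .ax _ => []
  | _, _, .andL _ _ _ _ d => bad d
  | _, _, .andR _ _ _ _ _ _ d e => bad d ++ bad e
  | _, _, .orL _ _ _ _ _ _ d e => bad d ++ bad e
  | _, _, .orR _ _ _ _ d => bad d
  | _, _, .impL _ _ _ _ _ _ d e => bad d ++ bad e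
  | _, _, .impR _ _ _ _ d => bad d
  | _, _, .notL _ _ _ d => bad d
  | _, _, .notR _ _ _ d => bad d
  | _, _, .wL _ _ _ d => bad d
  | _, _, .wR _ _ _ d => bad d
  | _, _, .cL _ _ _ d => bad d
  | _, _, .cR _ _ _ d => bad d
  | _, _, .cut _ _ _ _ _ d e => bad d ++ bad e
  | _, _, .allL t _ _ _ d => base (evT e0 t) :: bad d
  | _, _, .allR _ _ _ _ d => bad d
  | _, _, .exL _ _ _ _ d => bad d
  | _, _, .exR _ _ _ _ d => bad d
  | _, _, .permL _ _ _ _ d => bad d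
  | _, _, .permR _ _ _ _ d => bad d

theorem bad_len {Γ Δ} (d : Deriv Γ Δ) : (bad d).length ≤ d.size := by
  induction d <;> simp only [bad, Deriv.size, List.length_append, List.length_cons,
    List.length_nil] <;> omega

theorem axS_inst (v : ℕ) (u : UU) (h : base u ≠ v) :
    Sat v (consE u e0) (.imp (NN 0 (bv 0)) (NN 0 (app (suc.lift 0) (bv 0)))) := by
  rw [Sat_imp, NN, NN, Sat_fI, Sat_fI]
  simp only [evR, lift, consE, base_suc]
  omega

theorem sound (v : ℕ) {Γ Δ} (d : Deriv Γ Δ) : d.cutFms = [] → v ∉ bad d →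
    (∀ A ∈ Γ, negW A = true) → (∀ A ∈ Δ, posW A = true) →
    (∀ A ∈ Γ, A ≠ axS → Sat v e0 A) → ∃ B ∈ Δ, Sat v e0 B := by
  have axS_pos : posW axS = false := rfl
  induction d with
  | ax A =>
    intro _ _ h1 h2 h3
    refine ⟨A, by simp, h3 A (by simp) ?_⟩
    rintro rfl
    have := h2 axS (by simp)
    simp [axS_pos] at this
  | andL A B Γ Δ d ih =>
    intro hc hb h1 h2 h3
    have hs := Sat_and.1 (h3 (.and A B) (by simp) (by simp [axS, NN]))
    have hw := h1 (.and A B) (by simp)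
    simp only [negW, Bool.and_eq_true] at hw
    refine ih hc hb ?_ h2 ?_
    · intro D hD
      simp only [List.mem_cons] at hD
      rcases hD with rfl | rfl | hD
      · exact hw.1
      · exact hw.2
      · exact h1 D (by simp [hD])
    · intro D hD hne
      simp only [List.mem_cons] at hD
      rcases hD with rfl | rfl | hD
      · exact hs.1
      · exact hs.2
      · exact h3 D (by simp [hD]) hne
  | andR A B Γ₁ Δ₁ Γ₂ Δ₂ d e ih1 ih2 =>
    intro hc hb h1 h2 h3
    simp only [Deriv.cutFms, List.append_eq_nil_iff] at hc
    simp only [bad, List.mem_append, not_or] at hb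
    have hw := h2 (.and A B) (by simp)
    simp only [posW, Bool.and_eq_true] at hw
    obtain ⟨X, hX, sX⟩ := ih1 hc.1 hb.1 (fun D hD => h1 D (by simp [hD]))
      (by intro D hD; simp only [List.mem_cons] at hD
          rcases hD with rfl | hD
          · exact hw.1
          · exact h2 D (by simp [hD])) (fun D hD => h3 D (by simp [hD]))
    obtain ⟨Y, hY, sY⟩ := ih2 hc.2 hb.2 (fun D hD => h1 D (by simp [hD]))
      (by intro D hD; simp only [List.mem_cons] at hD
          rcases hD with rfl | hD
          · exact hw.2
          · exact h2 D (by simp [hD])) (fun D hD => h3 D (by simp [hD]))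
    simp only [List.mem_cons] at hX hY
    rcases hX with rfl | hX
    · rcases hY with rfl | hY
      · exact ⟨.and X Y, by simp, Sat_and.2 ⟨sX, sY⟩⟩
      · exact ⟨Y, by simp [hY], sY⟩
    · exact ⟨X, by simp [hX], sX⟩
  | orL A B Γ₁ Δ₁ Γ₂ Δ₂ d e ih1 ih2 =>
    intro hc hb h1 h2 h3
    simp only [Deriv.cutFms, List.append_eq_nil_iff] at hc
    simp only [bad, List.mem_append, not_or] at hb
    have hw := h1 (.or A B) (by simp)
    simp only [negW, Bool.and_eq_true] at hw
    have hs := Sat_or.1 (h3 (.or A B) (by simp) (by simp [axS, NN]))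
    rcases hs with hs | hs
    · obtain ⟨X, hX, sX⟩ := ih1 hc.1 hb.1
        (by intro D hD; simp only [List.mem_cons] at hD
            rcases hD with rfl | hD
            · exact hw.1
            · exact h1 D (by simp [hD])) (fun D hD => h2 D (by simp [hD]))
        (by intro D hD hne; simp only [List.mem_cons] at hD
            rcases hD with rfl | hD
            · exact hs
            · exact h3 D (by simp [hD]) hne)
      exact ⟨X, by simp [hX], sX⟩
    · obtain ⟨X, hX, sX⟩ := ih2 hc.2 hb.2
        (by intro D hD; simp only [List.mem_cons] at hD
            rcases hD with rfl | hD
            · exact hw.2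
            · exact h1 D (by simp [hD])) (fun D hD => h2 D (by simp [hD]))
        (by intro D hD hne; simp only [List.mem_cons] at hD
            rcases hD with rfl | hD
            · exact hs
            · exact h3 D (by simp [hD]) hne)
      exact ⟨X, by simp [hX], sX⟩
  | orR A B Γ Δ d ih =>
    intro hc hb h1 h2 h3
    have hw := h2 (.or A B) (by simp)
    simp only [posW, Bool.and_eq_true] at hw
    obtain ⟨X, hX, sX⟩ := ih hc hb h1
      (by intro D hD; simp only [List.mem_cons] at hD
          rcases hD with rfl | rfl | hD
          · exact hw.1
          · exact hw.2
          · exact h2 D (by simp [hD])) h3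
    simp only [List.mem_cons] at hX
    rcases hX with rfl | rfl | hX
    · exact ⟨.or X B, by simp, Sat_or.2 (Or.inl sX)⟩
    · exact ⟨.or A X, by simp, Sat_or.2 (Or.inr sX)⟩
    · exact ⟨X, by simp [hX], sX⟩
  | impL A B Γ₁ Δ₁ Γ₂ Δ₂ d e ih1 ih2 =>
    intro hc hb h1 h2 h3
    simp only [Deriv.cutFms, List.append_eq_nil_iff] at hc
    simp only [bad, List.mem_append, not_or] at hb
    have hw := h1 (.imp A B) (by simp)
    simp only [negW, Bool.and_eq_true] at hw
    have hs := Sat_imp.1 (h3 (.imp A B) (by simp) (by simp [axS, NN]))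
    obtain ⟨X, hX, sX⟩ := ih1 hc.1 hb.1 (fun D hD => h1 D (by simp [hD]))
      (by intro D hD; simp only [List.mem_cons] at hD
          rcases hD with rfl | hD
          · exact hw.1
          · exact h2 D (by simp [hD])) (fun D hD => h3 D (by simp [hD]))
    simp only [List.mem_cons] at hX
    rcases hX with rfl | hX
    · obtain ⟨Y, hY, sY⟩ := ih2 hc.2 hb.2
        (by intro D hD; simp only [List.mem_cons] at hD
            rcases hD with rfl | hD
            · exact hw.2
            · exact h1 D (by simp [hD])) (fun D hD => h2 D (by simp [hD]))
        (by intro D hD hne; simp only [List.mem_cons] at hD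
            rcases hD with rfl | hD
            · exact hs sX
            · exact h3 D (by simp [hD]) hne)
      exact ⟨Y, by simp [hY], sY⟩
    · exact ⟨X, by simp [hX], sX⟩
  | impR A B Γ Δ d ih =>
    intro hc hb h1 h2 h3
    have hw := h2 (.imp A B) (by simp)
    simp only [posW, Bool.and_eq_true] at hw
    by_cases hA : Sat v e0 A
    · obtain ⟨X, hX, sX⟩ := ih hc hb
        (by intro D hD; simp only [List.mem_cons] at hD
            rcases hD with rfl | hD
            · exact hw.1
            · exact h1 D (by simp [hD]))
        (by intro D hD; simp only [List.mem_cons] at hD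
            rcases hD with rfl | hD
            · exact hw.2
            · exact h2 D (by simp [hD]))
        (by intro D hD hne; simp only [List.mem_cons] at hD
            rcases hD with rfl | hD
            · exact hA
            · exact h3 D (by simp [hD]) hne)
      simp only [List.mem_cons] at hX
      rcases hX with rfl | hX
      · exact ⟨.imp A X, by simp, Sat_imp.2 fun _ => sX⟩
      · exact ⟨X, by simp [hX], sX⟩
    · exact ⟨.imp A B, by simp, Sat_imp.2 fun h => absurd h hA⟩
  | notL A Γ Δ d ih =>
    intro hc hb h1 h2 h3
    have hw := h1 (.not A) (by simp)
    simp only [negW] at hw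
    have hs := Sat_not.1 (h3 (.not A) (by simp) (by simp [axS, NN]))
    obtain ⟨X, hX, sX⟩ := ih hc hb (fun D hD => h1 D (by simp [hD]))
      (by intro D hD; simp only [List.mem_cons] at hD
          rcases hD with rfl | hD
          · exact hw
          · exact h2 D hD) (fun D hD => h3 D (by simp [hD]))
    simp only [List.mem_cons] at hX
    rcases hX with rfl | hX
    · exact absurd sX hs
    · exact ⟨X, hX, sX⟩
  | notR A Γ Δ d ih =>
    intro hc hb h1 h2 h3
    have hw := h2 (.not A) (by simp)
    simp only [posW] at hw
    by_cases hA : Sat v e0 A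
    · obtain ⟨X, hX, sX⟩ := ih hc hb
        (by intro D hD; simp only [List.mem_cons] at hD
            rcases hD with rfl | hD
            · exact hw
            · exact h1 D hD) (fun D hD => h2 D (by simp [hD]))
        (by intro D hD hne; simp only [List.mem_cons] at hD
            rcases hD with rfl | hD
            · exact hA
            · exact h3 D hD hne)
      exact ⟨X, by simp [hX], sX⟩
    · exact ⟨.not A, by simp, Sat_not.2 hA⟩
  | wL A Γ Δ d ih =>
    intro hc hb h1 h2 h3
    exact ih hc hb (fun D hD => h1 D (by simp [hD])) h2 (fun D hD => h3 D (by simp [hD]))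
  | wR A Γ Δ d ih =>
    intro hc hb h1 h2 h3
    obtain ⟨X, hX, sX⟩ := ih hc hb h1 (fun D hD => h2 D (by simp [hD])) h3
    exact ⟨X, by simp [hX], sX⟩
  | cL A Γ Δ d ih =>
    intro hc hb h1 h2 h3
    exact ih hc hb (fun D hD => h1 D (by simpa using hD)) h2
      (fun D hD => h3 D (by simpa using hD))
  | cR A Γ Δ d ih =>
    intro hc hb h1 h2 h3
    obtain ⟨X, hX, sX⟩ := ih hc hb h1 (fun D hD => h2 D (by simpa using hD)) h3
    exact ⟨X, by simpa using hX, sX⟩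
  | cut A Γ₁ Δ₁ Γ₂ Δ₂ d e ih1 ih2 =>
    intro hc
    simp [Deriv.cutFms] at hc
  | allL t A Γ Δ d ih =>
    intro hc hb h1 h2 h3
    have hw := h1 (.all A) (by simp)
    simp only [negW] at hw
    simp only [bad, List.mem_cons, not_or] at hb
    refine ih hc hb.2 ?_ h2 ?_
    · intro D hD
      simp only [List.mem_cons] at hD
      rcases hD with rfl | hD
      · rw [inst0, negW_sub]; exact hw
      · exact h1 D (by simp [hD])
    · intro D hD hne
      simp only [List.mem_cons] at hD
      rcases hD with rfl | hD
      · rw [sat_inst]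
        by_cases hA : Fm.all A = axS
        · simp only [axS, NN, Fm.all.injEq] at hA
          rw [hA]
          exact axS_inst v _ (fun h => hb.1 h.symm)
        · exact Sat_all.1 (h3 (.all A) (by simp) hA) _
      · exact h3 D (by simp [hD]) hne
  | allR a A Γ Δ d ih =>
    intro hc hb h1 h2 h3
    have := h2 (.all A) (by simp)
    simp [posW] at this
  | exL a A Γ Δ d ih =>
    intro hc hb h1 h2 h3
    have := h1 (.ex A) (by simp)
    simp [negW] at this
  | exR t A Γ Δ d ih =>
    intro hc hb h1 h2 h3
    have hw := h2 (.ex A) (by simp)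
    simp only [posW] at hw
    obtain ⟨X, hX, sX⟩ := ih hc hb h1
      (by intro D hD; simp only [List.mem_cons] at hD
          rcases hD with rfl | hD
          · rw [inst0, posW_sub]; exact hw
          · exact h2 D (by simp [hD])) h3
    simp only [List.mem_cons] at hX
    rcases hX with rfl | hX
    · rw [sat_inst] at sX
      exact ⟨.ex A, by simp, Sat_ex.2 ⟨_, sX⟩⟩
    · exact ⟨X, by simp [hX], sX⟩
  | permL Γ Γ' Δ p d ih =>
    intro hc hb h1 h2 h3
    exact ih hc hb (fun D hD => h1 D (p.mem_iff.1 hD)) h2 (fun D hD => h3 D (p.mem_iff.1 hD))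
  | permR Γ Δ Δ' p d ih =>
    intro hc hb h1 h2 h3
    obtain ⟨X, hX, sX⟩ := ih hc hb h1 (fun D hD => h2 D (p.mem_iff.1 hD)) h3
    exact ⟨X, p.mem_iff.1 hX, sX⟩

theorem TautF.sat (v : ℕ) {A : Fm} (h : TautF A) : ∀ e, Sat v e A := by
  induction h with
  | base A _ _ => intro e; exact Sat_imp.2 fun h => h
  | all _ ih => intro e; exact Sat_all.2 fun u => ih _

theorem sat_ax2 (v : ℕ) : Sat v e0 ax2 := by
  simp only [ax2, Sat_all, Sat_fE, evR, consE]
  intro f x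
  rfl

theorem sat_axC (v : ℕ) : Sat v e0 axC := by
  simp only [axC, Sat_all, Sat_imp, Sat_fE, evR, consE]
  intro x y z h
  rw [h]

theorem sat_axI (v : ℕ) : Sat v e0 axI := by
  simp only [axI, Sat_all, Sat_imp, Sat_fE, Sat_fI, evR, consE]
  intro x y h
  rw [h]
  exact fun h => h

theorem sat_axZ (v : ℕ) : Sat v e0 axZ := by
  rw [axZ, Sat_fI, evR]
  exact Nat.zero_le v

theorem twice_iter {α : Type} (k : ℕ) (f : α → α) :
    (fun (g : α → α) x => g (g x))^[k] f = f^[2^k] := by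
  induction k with
  | zero => rfl
  | succ k ih =>
    rw [Function.iterate_succ_apply', ih, pow_succ, mul_comm, two_mul, Function.iterate_add]
    rfl

def numeral (u : UU) (k : ℕ) : Prop :=
  ∀ n, u (n+2) = (fun (f : DD n → DD n) => f^[k] : DD (n+2))

theorem numeral_two : numeral uTwo 2 := fun _ => rfl

theorem numeral_app (u : UU) (k : ℕ) (h : numeral u k) : numeral (uApp u uTwo) (2^k) := by
  intro n
  show (u (n+3) : DD (n+2) → DD (n+2)) (uTwo (n+2)) = _
  rw [h (n+1)]
  funext f
  exact twice_iter k f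

theorem numeral_twos (n : ℕ) : ∀ (t : Tr) (m : ℕ), numeral (evR e0 t) (iterExp m 2) →
    numeral (evR e0 (twos n t)) (iterExp (m+n) 2) := by
  induction n with
  | zero => intro t m h; exact h
  | succ n ih =>
    intro t m h
    have := ih (app t two) (m+1) (numeral_app _ _ h)
    rw [show m + (n+1) = m + 1 + n by omega]
    exact this

theorem value (n : ℕ) :
    base (evR e0 (app (app (twos n two) suc) zer)) = iterExp n 2 := by
  have h := numeral_twos n two 0 numeral_two
  rw [zero_add] at h
  have h0 := h 0
  show ((evR e0 (twos n two) (0+2) : DD 1 → DD 1) (uSuc 1) : ℕ → ℕ) (0 : ℕ) = _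
  rw [h0]
  show (Nat.succ)^[iterExp n 2] 0 = _
  rw [Nat.succ_iterate, zero_add]

/-- the sequents -/
def seqL (n : ℕ) : List Fm := [tautOf n, axZ, axS, ax2, axC, axI]
def seqR (n : ℕ) : List Fm := [fI (app (app (twos n two) suc) zer)]

theorem weak_seq (n : ℕ) : WeakSeq (seqL n) (seqR n) := by
  constructor
  · intro A hA
    simp only [seqL, List.mem_cons, List.not_mem_nil, or_false] at hA
    rcases hA with rfl | rfl | rfl | rfl | rfl | rfl
    · exact (tautOf_taut n).negW
    all_goals rfl
  · intro A hA
    simp only [seqR, List.mem_cons, List.not_mem_nil, or_false] at hA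
    subst hA; rfl

theorem fo_seq (n : ℕ) : FOSeq (seqL n) (seqR n) := by
  constructor
  · intro A hA
    simp only [seqL, List.mem_cons, List.not_mem_nil, or_false] at hA
    rcases hA with rfl | rfl | rfl | rfl | rfl | rfl
    · exact (tautOf_taut n).fo
    all_goals rfl
  · intro A hA
    simp only [seqR, List.mem_cons, List.not_mem_nil, or_false] at hA
    subst hA; simp [isFO, fI, noEpsF, noEpsTs]

theorem lower (n : ℕ) (d : Deriv (seqL n) (seqR n)) (hc : d.cutFms = []) :
    iterExp n 2 ≤ d.size := by
  by_contra hlt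
  push Not at hlt
  obtain ⟨v, hv, hb⟩ : ∃ v < iterExp n 2, v ∉ bad d := by
    by_contra hcon
    push Not at hcon
    have h1 : Finset.range (iterExp n 2) ⊆ (bad d).toFinset := by
      intro v hv
      simpa using hcon v (by simpa using hv)
    have h2 := Finset.card_le_card h1
    have h3 := (bad d).toFinset_card_le
    have h4 := bad_len d
    simp at h2
    omega
  obtain ⟨B, hB, sB⟩ := sound v d hc hb (weak_seq n).1 (weak_seq n).2 (by
    intro A hA hne
    simp only [seqL, List.mem_cons, List.not_mem_nil, or_false] at hA
    rcases hA with rfl | rfl | rfl | rfl | rfl | rfl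
    · exact (tautOf_taut n).sat v e0
    · exact sat_axZ v
    · exact absurd rfl hne
    · exact sat_ax2 v
    · exact sat_axC v
    · exact sat_axI v)
  simp only [seqR, List.mem_singleton] at hB
  subst hB
  have hval := value n
  have := (Sat_fI _ _ _).1 sB
  omega

/-! ### growth -/
theorem iterExp_add (a b n : ℕ) : iterExp (a+b) n = iterExp a (iterExp b n) := by
  induction a with
  | zero => simp [iterExp]
  | succ a ih => rw [show a+1+b = (a+b)+1 by omega]; simp [iterExp, ih]

theorem iterExp_strict (a : ℕ) : StrictMono (iterExp a) := by
  induction a with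
  | zero => exact fun _ _ h => h
  | succ a ih =>
    intro x y h
    exact Nat.pow_lt_pow_right (by norm_num) (ih h)

theorem le_iterExp_two (r : ℕ) : r + 2 ≤ iterExp r 2 := by
  induction r with
  | zero => simp [iterExp]
  | succ r ih =>
    have := Nat.lt_two_pow_self (n := iterExp r 2)
    simp only [iterExp]
    omega

theorem growth (c : ℕ) : ∃ n, iterExp c (2^n - 1) < iterExp n 2 := by
  refine ⟨(c+1) + (c+1), ?_⟩
  have h1 : c + 1 + (c+1) < iterExp (c+1) 2 := by
    have h1 := le_iterExp_two c
    have h2 : 2 ^ (c+2) ≤ 2 ^ (iterExp c 2) := Nat.pow_le_pow_right (by norm_num) h1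
    have h3 := Nat.lt_two_pow_self (n := c)
    simp only [iterExp]
    rw [pow_add] at h2
    omega
  calc iterExp c (2^((c+1) + (c+1)) - 1)
      ≤ iterExp c (2^((c+1) + (c+1))) := (iterExp_strict c).monotone (Nat.sub_le _ _)
    _ = iterExp (c+1) ((c+1)+(c+1)) := by rw [iterExp_add c 1]; rfl
    _ < iterExp (c+1) (iterExp (c+1) 2) := iterExp_strict _ h1
    _ = _ := (iterExp_add _ _ _).symm

theorem non_elem (f : ℕ → ℕ) (hf : IsElementary f) :
    ¬ ∀ i, ∃ d : Deriv (seqL (Nat.log 2 (i+1))) (seqR (Nat.log 2 (i+1))),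
      d.cutFms = [] ∧ d.size ≤ f i := by
  intro h
  obtain ⟨c, hc⟩ := hf
  obtain ⟨n, hn⟩ := growth c
  obtain ⟨d, h1, h2⟩ := h (2^n - 1)
  have h3 := lower _ d h1
  have h4 : 2^n - 1 + 1 = 2^n := Nat.sub_add_cancel (Nat.one_le_pow _ _ (by norm_num))
  have h5 : Nat.log 2 (2^n - 1 + 1) = n := by rw [h4]; exact Nat.log_pow (by norm_num) n
  have h6 : iterExp n 2 ≤ d.size := le_trans (le_of_eq (by rw [h5])) h3
  have h7 := hc (2^n - 1)
  omega

theorem sz_twos (n : ℕ) : ∀ t : Tr, szT (twos n t).toTm = szT t.toTm + 2 * n := by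
  induction n with
  | zero => intro t; rfl
  | succ n ih => intro t; simp only [twos, ih, toTm, szT, szTs]; omega

theorem sz_seq (n : ℕ) : seqSize (seqL n) (seqR n) ≤ 300 * 4 ^ n + 2 * n + 1000 := by
  have h1 := sz_tautOf n
  have h2 := sz_twos n two
  simp only [toTm, szT, szTs] at h2
  simp only [seqSize, seqL, seqR, List.cons_append, List.nil_append, List.foldr_cons,
    List.foldr_nil, axZ, axS, ax2, axC, axI, NN, fI, fE, toTm, szF, szT, szTs, lift, h2]
  omega

theorem four_pow_log (i : ℕ) : 4 ^ Nat.log 2 (i+1) ≤ (i+1)^2 := by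
  have := Nat.pow_log_le_self 2 (x := i+1) (by omega)
  calc 4 ^ Nat.log 2 (i+1) = (2 ^ Nat.log 2 (i+1))^2 := by
        rw [← pow_mul, mul_comm, pow_mul]; norm_num
    _ ≤ _ := Nat.pow_le_pow_left this 2

theorem log_le (i : ℕ) : Nat.log 2 (i+1) ≤ i + 1 := Nat.log_le_self 2 (i+1)

/-- There is a family of first-order sequents `S i` such
that: (1) the size of `S i` is polynomial in `i`; (2) no elementary function of
`i` bounds the size of the smallest cut-free LK⁺-proofs, nor of the smallest
cut-free LK⁺⁺-proofs, of `S i`; (3) `S i` has proofs with cuts of polynomial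
size; (4) `S i` contains weak quantifiers only; (5) for every cut formula `A`
of the polynomial-size proof, `∀x̄ (A^M → A^M)` occurs in the antecedent of
`S i`. -/
theorem worst_case_for_lkplus :
    ∃ S : ℕ → List Fm × List Fm,
      (∀ i, FOSeq (S i).1 (S i).2) ∧
      -- (1)
      (∃ p : Polynomial ℕ, ∀ i, seqSize (S i).1 (S i).2 ≤ p.eval i) ∧
      -- (2) for cut-free LK⁺-proofs
      (∀ f : ℕ → ℕ, IsElementary f →
        ¬ ∀ i, ∃ d : Deriv (S i).1 (S i).2,
            SuitP d ∧ d.cutFms = [] ∧ d.size ≤ f i) ∧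
      -- (2) likewise for cut-free LK⁺⁺-proofs
      (∀ f : ℕ → ℕ, IsElementary f →
        ¬ ∀ i, ∃ d : Deriv (S i).1 (S i).2,
            SuitPP d ∧ d.cutFms = [] ∧ d.size ≤ f i) ∧
      -- (3) together with (5)
      (∃ q : Polynomial ℕ, ∀ i, ∃ d : Deriv (S i).1 (S i).2,
          d.Std ∧ d.size ≤ q.eval i ∧
          ∀ A ∈ d.cutFms,
            uclose (Fm.imp (matrix A) (matrix A)) ∈ (S i).1) ∧
      -- (4)
      (∀ i, WeakSeq (S i).1 (S i).2) := by
  refine ⟨fun i => (seqL (Nat.log 2 (i+1)), seqR (Nat.log 2 (i+1))), fun i => fo_seq _, ?_, ?_, ?_,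
    ?_, fun i => weak_seq _⟩
  · refine ⟨Polynomial.C 300 * (Polynomial.X + 1)^2 + Polynomial.C 2 * (Polynomial.X + 1)
      + Polynomial.C 1000, fun i => ?_⟩
    have h1 := sz_seq (Nat.log 2 (i+1))
    have h2 := four_pow_log i
    have h3 := log_le i
    simp only [Polynomial.eval_add, Polynomial.eval_mul, Polynomial.eval_pow, Polynomial.eval_X,
      Polynomial.eval_C, Polynomial.eval_one]
    omega
  · intro f hf h
    refine non_elem f hf fun i => ?_
    obtain ⟨d, _, h1, h2⟩ := h i
    exact ⟨d, h1, h2⟩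
  · intro f hf h
    refine non_elem f hf fun i => ?_
    obtain ⟨d, _, h1, h2⟩ := h i
    exact ⟨d, h1, h2⟩
  · refine ⟨Polynomial.C 3000 * (Polynomial.X + 4)^2 + 1, fun i => ?_⟩
    obtain ⟨d, h1, h2, h3⟩ := (prov_final (Nat.log 2 (i+1))).weak (tautOf (Nat.log 2 (i+1)))
    refine ⟨d, h1, h2.trans ?_, ?_⟩
    · have h4 : (Nat.log 2 (i+1) + 3)^2 ≤ (i+4)^2 :=
        Nat.pow_le_pow_left (by have := log_le i; omega) 2
      simp only [Polynomial.eval_add, Polynomial.eval_mul, Polynomial.eval_pow, Polynomial.eval_X,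
        Polynomial.eval_C, Polynomial.eval_one, Polynomial.eval_ofNat]
      omega
    · intro A hA
      rw [h3 A hA]
      exact List.mem_cons_self ..

end EpsCalc
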